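/- arXiv:0810.1195 — 2 statements merged into one kernel-verified Lean document; each statement's English description precedes it below -/
import Mathlib

section
/- Let E′ > 0 and let φ be a Schwartz function on ℝ. Suppose that for each degeneracy sign s ∈ {+,−} the function G_s(𝓔) := ∫_ℝ conj(χ^𝓔_s(q)) φ(q) dq, defined for real 𝓔, is a Schwartz function on ℝ and admits an extension that is continuous on the closed lower half-plane {Im 𝓔 ≤ 0}, holomorphic on the open lower half-plane {Im 𝓔 < 0}, and lies in the Hardy class from below, i.e. sup_{y<0} ∫_ℝ |G_s(u + iy)|² du < ∞. Then φ admits the discrete resonance expansion φ(q) = Σ_{n=0}^∞ (∫_ℝ conj(f_n^+(q′)) φ(q′) dq′) · f_n^−(q) for every q ∈ ℝ, the series converging pointwise. -/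
open MeasureTheory Filter Complex

/-- Physicists' Hermite polynomials. -/
noncomputable def hermitePoly : ℕ → ℂ → ℂ
  | 0, _ => 1
  | 1, y => 2 * y
  | (n + 2), y => 2 * y * hermitePoly (n + 1) y - 2 * (n + 1) * hermitePoly n y

/-- The generalized (resonance) eigenfunctions `f_n^±` (sign `s = ±1`). -/
noncomputable def fres (E' s : ℝ) (n : ℕ) (q : ℝ) : ℂ :=
  (((E' / Real.pi) ^ ((1 : ℝ) / 4) : ℝ) : ℂ) *
    (((Real.sqrt (2 ^ n * n.factorial) : ℝ) : ℂ))⁻¹ *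
    Complex.exp ((s : ℂ) * Complex.I * (Real.pi : ℂ) / 8) *
    Complex.exp (-(s : ℂ) * Complex.I * ((E' / 2 : ℝ) : ℂ) * (q : ℂ) ^ 2) *
    hermitePoly n (Complex.exp ((s : ℂ) * Complex.I * (Real.pi : ℂ) / 4) *
      ((Real.sqrt E' : ℝ) : ℂ) * (q : ℂ))

/-- The parameter `ν := −i𝓔/E′ − ½`. -/
noncomputable def nuOf (E' e : ℝ) : ℂ := -Complex.I * (e : ℂ) / (E' : ℂ) - 1 / 2

/-- The generalized continuum eigenfunctions `χ^𝓔_±` of the inverted harmonic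
oscillator (degeneracy sign `sgn = ±1`):
`χ^𝓔_±(q) = (E′/2π²)^{1/4} (2πE′)^{−1/2} e^{iπ(2ν+1)/8} e^{iE′q²/2}
∫₀^∞ exp(± e^{−iπ/4} √(2E′) q u − u²/2) u^ν du`. -/
noncomputable def chiE (E' sgn e : ℝ) (q : ℝ) : ℂ :=
  (((E' / (2 * Real.pi ^ 2)) ^ ((1 : ℝ) / 4) : ℝ) : ℂ) *
    ((((Real.sqrt (2 * Real.pi * E'))⁻¹ : ℝ)) : ℂ) *
    Complex.exp (Complex.I * (Real.pi : ℂ) * (2 * nuOf E' e + 1) / 8) *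
    Complex.exp (Complex.I * (E' : ℂ) * (q : ℂ) ^ 2 / 2) *
    ∫ u in Set.Ioi (0 : ℝ),
      Complex.exp ((sgn : ℂ) * Complex.exp (-Complex.I * (Real.pi : ℂ) / 4) *
          ((Real.sqrt (2 * E') : ℝ) : ℂ) * (q : ℂ) * (u : ℂ) - (u : ℂ) ^ 2 / 2) *
        (u : ℂ) ^ (nuOf E' e)

open scoped FourierTransform SchwartzMap Topology

/-!
Put `f q = e^{-iE'q²/2} φ q`. Writing `χ^𝓔_s` as a Mellin integral and rotating its contour by
`π/4`, one finds that `G_s` is, up to a nonzero constant and an affine change of variable, the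
Mellin transform on the line `Re S = 1/2` of `t ↦ e^{-it²/2} 𝓕⁻ f (sκt)`, where `κ = √(2E') / 2π`.
That transform continues holomorphically to `Re S > 1/2`, where it must agree with the extension of
`G_s`, so the Hardy bound controls its `L²` norm on all vertical lines. By a Paley–Wiener argument
for the Mellin transform, `𝓕⁻ f` vanishes beyond a bounded distance on the ray of sign `s`; the two
signs together make `f` band-limited.

The Hermite generating function turns the Fourier inversion formula for a band-limited `f` into a
dominated, hence convergent, series of Hermite functions of a complex multiple of `q`. Its
coefficients are moments of a Gaussian times `𝓕⁻ f`; Parseval for Gaussians of imaginary exponent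
and integration by parts identify them with the pairings of `f_n^+` and `φ`.
-/

section Hermite

theorem hasDerivAt_hermitePoly (n : ℕ) (y : ℂ) :
    HasDerivAt (hermitePoly n) (2 * y * hermitePoly n y - hermitePoly (n + 1) y) y := by
  induction n using Nat.twoStepInduction with
  | zero => simpa [hermitePoly] using hasDerivAt_const y (1 : ℂ)
  | one => simpa [hermitePoly] using (hasDerivAt_id' y).const_mul (2 : ℂ)
  | more n ih₁ ih₂ =>
    have h := (((hasDerivAt_id' y).const_mul (2 : ℂ)).mul ih₂).sub
      (ih₁.const_mul (2 * ((n : ℂ) + 1)))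
    refine h.congr_deriv ?_
    simp only [hermitePoly]
    push_cast
    ring

theorem conj_hermitePoly (n : ℕ) (y : ℂ) :
    starRingEnd ℂ (hermitePoly n y) = hermitePoly n (starRingEnd ℂ y) := by
  induction n using Nat.twoStepInduction with
  | zero => simp [hermitePoly]
  | one => simp [hermitePoly, map_ofNat]
  | more n ih₁ ih₂ => simp [hermitePoly, ih₁, ih₂, map_ofNat]

theorem iteratedDeriv_cexp_two_mul_sub_sq (x : ℂ) (n : ℕ) :
    iteratedDeriv n (fun w => cexp (2 * x * w - w ^ 2)) =
      fun w => hermitePoly n (x - w) * cexp (2 * x * w - w ^ 2) := by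
  induction n with
  | zero => simp [hermitePoly]
  | succ n ih =>
    rw [iteratedDeriv_succ, ih]
    ext w
    have hpoly := (hasDerivAt_hermitePoly n (x - w)).comp w ((hasDerivAt_id' w).const_sub x)
    have hexp := (((hasDerivAt_id' w).const_mul (2 * x)).sub ((hasDerivAt_id' w).pow 2)).cexp
    refine (hpoly.mul hexp).deriv.trans ?_
    simp
    ring

theorem hasSum_hermitePoly_generating (x z : ℂ) :
    HasSum (fun n => hermitePoly n x * z ^ n / n.factorial) (cexp (2 * x * z - z ^ 2)) := by
  have hd : Differentiable ℂ fun w => cexp (2 * x * w - w ^ 2) := by fun_prop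
  refine (Complex.hasSum_taylorSeries_of_entire hd 0 z).congr_fun fun n => ?_
  simp [iteratedDeriv_cexp_two_mul_sub_sq]
  field_simp

theorem hasTemperateGrowth_hermitePoly_comp_mul (α : ℂ) (n : ℕ) :
    Function.HasTemperateGrowth fun q : ℝ => hermitePoly n (α * q) := by
  induction n using Nat.twoStepInduction with
  | zero => simpa only [hermitePoly] using Function.HasTemperateGrowth.const (E := ℝ) (1 : ℂ)
  | one => simp only [hermitePoly]; fun_prop
  | more n ih₁ ih₂ => simp only [hermitePoly]; fun_prop

end Hermite

section GaussianParseval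

theorem norm_cexp_neg_mul_sq_le_one {b : ℂ} (hb : 0 ≤ b.re) (x : ℝ) :
    ‖cexp (-b * (x : ℂ) ^ 2)‖ ≤ 1 := by
  rw [norm_cexp_neg_mul_sq, Real.exp_le_one_iff]
  nlinarith [mul_nonneg hb (sq_nonneg x)]

theorem continuousOn_integral_cexp_neg_mul_sq {f : ℝ → ℂ} (hf : Integrable f) :
    ContinuousOn (fun b => ∫ x : ℝ, cexp (-b * (x : ℂ) ^ 2) * f x) {b : ℂ | 0 ≤ b.re} := by
  refine continuousOn_of_dominated (bound := fun x => ‖f x‖) (fun b _ => ?_)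
    (fun b hb => .of_forall fun x => ?_) hf.norm (.of_forall fun x => by fun_prop)
  · exact (Continuous.aestronglyMeasurable (by fun_prop)).mul hf.1
  · rw [norm_mul]
    exact mul_le_of_le_one_left (norm_nonneg _) (norm_cexp_neg_mul_sq_le_one hb x)

theorem re_sq_div_nonneg {b : ℂ} (hb : 0 ≤ b.re) (r : ℝ) : 0 ≤ ((r : ℂ) ^ 2 / b).re := by
  rw [← ofReal_pow, div_eq_mul_inv, re_ofReal_mul, inv_re]
  exact mul_nonneg (sq_nonneg r) (div_nonneg hb (normSq_nonneg b))

theorem integral_cexp_neg_mul_sq_mul_of_re_pos {b : ℂ} (hb : 0 < b.re) (f : 𝓢(ℝ, ℂ)) :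
    ∫ x : ℝ, cexp (-b * (x : ℂ) ^ 2) * f x =
      (Real.pi / b) ^ (1 / 2 : ℂ) *
        ∫ ξ : ℝ, cexp (-((Real.pi : ℂ) ^ 2 / b) * (ξ : ℂ) ^ 2) * 𝓕⁻ f ξ := by
  have hinv : 𝓕 (𝓕⁻ f) = f := FourierTransform.fourier_fourierInv_eq f
  have hself : ∫ ξ : ℝ, 𝓕 (fun x : ℝ => cexp (-b * (x : ℂ) ^ 2)) ξ * 𝓕⁻ f ξ =
      ∫ x : ℝ, cexp (-b * (x : ℂ) ^ 2) * 𝓕 (𝓕⁻ f) x := by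
    simpa only [flip_innerₗ, smul_eq_mul] using!
      VectorFourier.integral_fourierIntegral_smul_eq_flip (L := innerₗ ℝ)
        Real.continuous_fourierChar continuous_inner (integrable_cexp_neg_mul_sq hb)
        ((𝓕⁻ f).integrable (μ := volume))
  have hgauss (ξ : ℝ) : 𝓕 (fun x : ℝ => cexp (-b * (x : ℂ) ^ 2)) ξ =
      (Real.pi / b) ^ (1 / 2 : ℂ) * cexp (-((Real.pi : ℂ) ^ 2 / b) * (ξ : ℂ) ^ 2) := by
    have h := fourier_gaussian_innerProductSpace hb ξ
    simp only [Real.norm_eq_abs, ← ofReal_pow, sq_abs, Module.finrank_self, Nat.cast_one] at h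
    push_cast at h
    rw [h]
    congr 2
    ring
  rw [hinv] at hself
  simp only [← hself, hgauss, mul_assoc, integral_const_mul]

theorem continuousAt_pi_div_cpow_half {b : ℂ} (hb : b ∈ slitPlane) :
    ContinuousAt (fun b : ℂ => (Real.pi / b) ^ (1 / 2 : ℂ)) b := by
  have hne := slitPlane_ne_zero hb
  refine ContinuousAt.cpow (by fun_prop (disch := assumption)) continuousAt_const ?_
  rcases mem_slitPlane_iff.1 hb with h | h
  · left
    rw [div_eq_mul_inv, re_ofReal_mul, inv_re]
    exact mul_pos Real.pi_pos (div_pos h (normSq_pos.2 hne))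
  · right
    rw [div_eq_mul_inv, im_ofReal_mul, inv_im]
    exact mul_ne_zero Real.pi_ne_zero (div_ne_zero (neg_ne_zero.2 h) (normSq_pos.2 hne).ne')

theorem integral_cexp_neg_mul_sq_mul {b : ℂ} (hb : 0 ≤ b.re) (hb₀ : b ≠ 0) (f : 𝓢(ℝ, ℂ)) :
    ∫ x : ℝ, cexp (-b * (x : ℂ) ^ 2) * f x =
      (Real.pi / b) ^ (1 / 2 : ℂ) *
        ∫ ξ : ℝ, cexp (-((Real.pi : ℂ) ^ 2 / b) * (ξ : ℂ) ^ 2) * 𝓕⁻ f ξ := by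
  let H : Set ℂ := {b | 0 ≤ b.re} ∩ {0}ᶜ
  have hslit : H ⊆ slitPlane := by
    rintro z ⟨hz, hz₀⟩
    by_contra! h
    rw [mem_slitPlane_iff, not_or, not_not] at h
    exact hz₀ (Complex.ext (le_antisymm (not_lt.1 h.1) hz) h.2)
  have hleft := (continuousOn_integral_cexp_neg_mul_sq f.integrable).mono
    (Set.inter_subset_left : H ⊆ _)
  have hright : ContinuousOn (fun b : ℂ => (Real.pi / b) ^ (1 / 2 : ℂ) *
      ∫ ξ : ℝ, cexp (-((Real.pi : ℂ) ^ 2 / b) * (ξ : ℂ) ^ 2) * 𝓕⁻ f ξ) H := by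
    refine ContinuousOn.mul
      (fun z hz => (continuousAt_pi_div_cpow_half (hslit hz)).continuousWithinAt) ?_
    exact (continuousOn_integral_cexp_neg_mul_sq (𝓕⁻ f).integrable).comp
      (continuousOn_const.div continuousOn_id fun z hz => hz.2)
      fun z hz => re_sq_div_nonneg hz.1 _
  refine Set.EqOn.of_subset_closure (s := {b : ℂ | 0 < b.re})
    (fun z hz => integral_cexp_neg_mul_sq_mul_of_re_pos hz f) hleft hright
    (fun z hz => ⟨le_of_lt (a := (0 : ℝ)) hz, fun h => by simp_all⟩) ?_ ⟨hb, hb₀⟩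
  rw [Complex.closure_setOfPred_lt_re]
  exact Set.inter_subset_left

end GaussianParseval

section HermiteExpansion

theorem fourierInv_derivCLM_apply (f : 𝓢(ℝ, ℂ)) (ξ : ℝ) :
    𝓕⁻ (SchwartzMap.derivCLM ℝ ℂ f) ξ = -(2 * Real.pi * I) * ξ * 𝓕⁻ f ξ := by
  have hid : Function.HasTemperateGrowth fun x : ℝ => inner ℝ x (1 : ℝ) := by fun_prop
  calc 𝓕⁻ (SchwartzMap.derivCLM ℝ ℂ f) ξ
      = 𝓕⁻ (LineDeriv.lineDerivOp (1 : ℝ) f) ξ := by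
        congr 2
    _ = -(2 * Real.pi * I) * ξ * 𝓕⁻ f ξ := by
        rw [SchwartzMap.fourierInv_lineDerivOp_eq, smul_apply,
          SchwartzMap.smulLeftCLM_apply_apply hid]
        simp [mul_assoc]

variable {α : ℂ}

theorem integrable_cexp_neg_sq_mul_hermitePoly_mul (hα : 0 ≤ (α ^ 2).re) (n : ℕ) (f : 𝓢(ℝ, ℂ)) :
    Integrable fun q : ℝ => cexp (-α ^ 2 * (q : ℂ) ^ 2) * hermitePoly n (α * q) * f q := by
  have h := (SchwartzMap.smulLeftCLM ℂ (fun q : ℝ => hermitePoly n (α * q)) f).integrable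
    (μ := volume)
  refine (h.bdd_mul (c := 1) (Continuous.aestronglyMeasurable (by fun_prop))
    (.of_forall (norm_cexp_neg_mul_sq_le_one hα))).congr (.of_forall fun q => ?_)
  simp [SchwartzMap.smulLeftCLM_apply_apply (hasTemperateGrowth_hermitePoly_comp_mul α n),
    mul_assoc]

theorem hasDerivAt_cexp_neg_sq_mul_hermitePoly (α : ℂ) (n : ℕ) (q : ℝ) :
    HasDerivAt (fun q : ℝ => cexp (-α ^ 2 * (q : ℂ) ^ 2) * hermitePoly n (α * q))
      (-α * (cexp (-α ^ 2 * (q : ℂ) ^ 2) * hermitePoly (n + 1) (α * q))) q := by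
  have hexp := (((hasDerivAt_id' (q : ℂ)).pow 2).const_mul (-α ^ 2)).cexp
  have hpoly := (hasDerivAt_hermitePoly n (α * q)).comp (q : ℂ)
    ((hasDerivAt_id' (q : ℂ)).const_mul α)
  refine (hexp.mul hpoly).comp_ofReal.congr_deriv ?_
  simp
  ring

theorem mul_integral_cexp_neg_sq_mul_hermitePoly_succ (hα : 0 ≤ (α ^ 2).re) (n : ℕ)
    (f : 𝓢(ℝ, ℂ)) :
    α * ∫ q : ℝ, cexp (-α ^ 2 * (q : ℂ) ^ 2) * hermitePoly (n + 1) (α * q) * f q =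
      ∫ q : ℝ, cexp (-α ^ 2 * (q : ℂ) ^ 2) * hermitePoly n (α * q) *
        SchwartzMap.derivCLM ℝ ℂ f q := by
  have hint (m : ℕ) := integrable_cexp_neg_sq_mul_hermitePoly_mul hα m
  rw [integral_mul_deriv_eq_deriv_mul_of_integrable
    (fun q _ => hasDerivAt_cexp_neg_sq_mul_hermitePoly α n q)
    (fun q _ => by simpa using f.hasDerivAt q) (hint n _)
    (by simpa only [Pi.mul_def, mul_assoc] using (hint (n + 1) f).const_mul (-α)) (hint n f),
    ← integral_neg, ← integral_const_mul]
  congr 1 with q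
  ring

theorem integral_cexp_neg_sq_mul_hermitePoly_mul (hα : 0 ≤ (α ^ 2).re) (hα₀ : α ≠ 0) (n : ℕ)
    (f : 𝓢(ℝ, ℂ)) :
    ∫ q : ℝ, cexp (-α ^ 2 * (q : ℂ) ^ 2) * hermitePoly n (α * q) * f q =
      (Real.pi / α ^ 2) ^ (1 / 2 : ℂ) * 2 ^ n *
        ∫ ξ : ℝ, (-(Real.pi * I / α) * ξ) ^ n *
          (cexp (-((Real.pi : ℂ) ^ 2 / α ^ 2) * (ξ : ℂ) ^ 2) * 𝓕⁻ f ξ) := by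
  induction n generalizing f with
  | zero => simpa [hermitePoly] using integral_cexp_neg_mul_sq_mul hα (pow_ne_zero 2 hα₀) f
  | succ n ih =>
    refine mul_left_cancel₀ hα₀ ?_
    rw [mul_integral_cexp_neg_sq_mul_hermitePoly_succ hα, ih, ← integral_const_mul,
      ← integral_const_mul, ← integral_const_mul]
    congr 1 with ξ
    have hβ : -(2 * Real.pi * I) * ξ = 2 * α * (-(Real.pi * I / α) * ξ) := by field_simp
    rw [fourierInv_derivCLM_apply, hβ]
    generalize -(Real.pi * I / α) * (ξ : ℂ) = z
    ring

theorem integral_generating_mul_fourierInv (hα₀ : α ≠ 0) (f : 𝓢(ℝ, ℂ)) (q : ℝ) :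
    ∫ ξ : ℝ, cexp (2 * (α * q) * (-(Real.pi * I / α) * ξ) - (-(Real.pi * I / α) * ξ) ^ 2) *
      (cexp (-((Real.pi : ℂ) ^ 2 / α ^ 2) * (ξ : ℂ) ^ 2) * 𝓕⁻ f ξ) = f q := by
  have hinv : 𝓕 (𝓕⁻ f) = f := FourierTransform.fourier_fourierInv_eq f
  conv_rhs => rw [← hinv]
  rw [SchwartzMap.fourier_coe, Real.fourier_real_eq_integral_exp_smul]
  congr 1 with ξ
  rw [← mul_assoc, ← Complex.exp_add, smul_eq_mul]
  congr 2
  push_cast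
  field_simp
  linear_combination -(Real.pi * ξ ^ 2 : ℂ) * I_sq

theorem hasSum_hermitePoly_of_fourierInv_support (hα : 0 ≤ (α ^ 2).re) (hα₀ : α ≠ 0)
    {f : 𝓢(ℝ, ℂ)} {R : ℝ} (hf : ∀ ξ : ℝ, R < |ξ| → 𝓕⁻ f ξ = 0) (q : ℝ) :
    HasSum (fun n => hermitePoly n (α * q) / (2 ^ n * n.factorial) *
        ∫ x : ℝ, cexp (-α ^ 2 * (x : ℂ) ^ 2) * hermitePoly n (α * x) * f x)
      ((Real.pi / α ^ 2) ^ (1 / 2 : ℂ) * f q) := by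
  set z : ℝ → ℂ := fun ξ => -(Real.pi * I / α) * ξ
  set g : ℝ → ℂ := fun ξ => cexp (-((Real.pi : ℂ) ^ 2 / α ^ 2) * (ξ : ℂ) ^ 2) * 𝓕⁻ f ξ with hg
  have hg_int : Integrable g := (𝓕⁻ f).integrable.bdd_mul (c := 1)
    (Continuous.aestronglyMeasurable (by fun_prop))
    (.of_forall (norm_cexp_neg_mul_sq_le_one (re_sq_div_nonneg hα _)))
  set ρ : ℂ := Real.pi * I / α * R
  have hz (ξ : ℝ) (h : g ξ ≠ 0) : ‖z ξ‖ ≤ ‖ρ‖ := by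
    have hξ : |ξ| ≤ R := not_lt.1 fun hR => h (by simp [hg, hf ξ hR])
    simp only [z, ρ, norm_mul, norm_neg, norm_real, Real.norm_eq_abs]
    exact mul_le_mul_of_nonneg_left (hξ.trans (le_abs_self R)) (norm_nonneg _)
  have hsum := (hasSum_hermitePoly_generating (α * q) ρ).summable.norm
  have key : HasSum (fun n => ∫ ξ, hermitePoly n (α * q) * z ξ ^ n / n.factorial * g ξ) (f q) := by
    rw [← integral_generating_mul_fourierInv hα₀ f q]
    refine hasSum_integral_of_dominated_convergence
      (fun n ξ => ‖hermitePoly n (α * q) * ρ ^ n / n.factorial‖ * ‖g ξ‖) (fun n => ?_)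
      (fun n => .of_forall fun ξ => ?_) (.of_forall fun ξ => hsum.mul_right _) ?_
      (.of_forall fun ξ => (hasSum_hermitePoly_generating _ _).mul_right _)
    · exact (Continuous.aestronglyMeasurable (by fun_prop)).mul hg_int.1
    · rcases eq_or_ne (g ξ) 0 with h | h
      · simp [h]
      · simp only [norm_mul, norm_div, norm_pow]
        gcongr
        exact hz ξ h
    · simpa only [tsum_mul_right] using hg_int.norm.const_mul _
  refine (key.mul_left _).congr_fun fun n => ?_
  have hcoeff := integral_cexp_neg_sq_mul_hermitePoly_mul hα hα₀ n f
  change _ = _ * ∫ ξ, z ξ ^ n * g ξ at hcoeff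
  rw [hcoeff]
  simp only [mul_div_right_comm _ (_ ^ n), mul_assoc, integral_const_mul]
  field_simp

end HermiteExpansion

section MellinPaleyWiener

/-- Continuous functions decaying at `+∞` faster than every power. Their Mellin transforms converge
and are holomorphic on the right half-plane. -/
structure RapidAtTop (f : ℝ → ℂ) : Prop where
  continuous : Continuous f
  isBigO : ∀ a : ℝ, 0 < a → f =O[atTop] fun t : ℝ => t ^ (-a)

namespace RapidAtTop

variable {f f' : ℝ → ℂ} {s : ℂ}

theorem of_schwartzMap (f : 𝓢(ℝ, ℂ)) : RapidAtTop f := by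
  refine ⟨f.continuous, fun a _ => ?_⟩
  refine ((f.isBigO_cocompact_rpow (-a)).mono atTop_le_cocompact).congr' .rfl ?_
  filter_upwards [eventually_ge_atTop 0] with t ht
  rw [Real.norm_of_nonneg ht]

theorem neg (hf : RapidAtTop f) : RapidAtTop fun t => -f t :=
  ⟨hf.continuous.neg, fun a ha => (hf.isBigO a ha).neg_left⟩

theorem isBigO_nhdsGT_zero (hf : RapidAtTop f) :
    f =O[𝓝[>] 0] fun t : ℝ => t ^ (-0 : ℝ) := by
  simp only [neg_zero, Real.rpow_zero]
  exact (hf.continuous.continuousAt.tendsto.isBigO_one ℝ).mono nhdsWithin_le_nhds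

theorem mellinConvergent (hf : RapidAtTop f) (hs : 0 < s.re) : MellinConvergent f s :=
  mellinConvergent_of_isBigO_rpow (hf.continuous.locallyIntegrable.locallyIntegrableOn _)
    (hf.isBigO (s.re + 1) (by linarith)) (by linarith) hf.isBigO_nhdsGT_zero hs

theorem differentiableAt_mellin (hf : RapidAtTop f) (hs : 0 < s.re) :
    DifferentiableAt ℂ (mellin f) s :=
  mellin_differentiableAt_of_isBigO_rpow (hf.continuous.locallyIntegrable.locallyIntegrableOn _)
    (hf.isBigO (s.re + 1) (by linarith)) (by linarith) hf.isBigO_nhdsGT_zero hs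

theorem tendsto_cpow_mul (hf : RapidAtTop f) (hs : 0 < s.re) :
    Tendsto (fun t : ℝ => (t : ℂ) ^ s * f t) atTop (𝓝 0) := by
  have hcpow : (fun t : ℝ => (t : ℂ) ^ s) =O[atTop] fun t : ℝ => t ^ s.re := by
    refine .of_bound 1 ?_
    filter_upwards [eventually_gt_atTop 0] with t ht
    rw [norm_cpow_eq_rpow_re_of_pos ht, Real.norm_of_nonneg (by positivity), one_mul]
  refine (hcpow.mul (hf.isBigO (s.re + 1) (by linarith))).trans_tendsto ?_
  refine (tendsto_rpow_neg_atTop one_pos).congr' ?_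
  filter_upwards [eventually_gt_atTop 0] with t ht
  rw [← Real.rpow_add ht]
  ring_nf

theorem mellin_deriv (hf : RapidAtTop f) (hf' : RapidAtTop f')
    (hderiv : ∀ t, HasDerivAt f (f' t) t) (hs : 0 < s.re) :
    mellin f' (s + 1) = -s * mellin f s := by
  have hs₀ : s ≠ 0 := by rintro rfl; simp at hs
  have hf_int := (hf.mellinConvergent hs).const_mul s
  have hf'_int := hf'.mellinConvergent (s := s + 1) (by simp only [add_re, one_re]; linarith)
  have hprod (t : ℝ) (ht : t ∈ Set.Ioi 0) : HasDerivAt (fun t : ℝ => (t : ℂ) ^ s * f t)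
      (s * ((t : ℂ) ^ (s - 1) • f t) + (t : ℂ) ^ (s + 1 - 1) • f' t) t := by
    have hcpow := (hasDerivAt_id (t : ℂ)).cpow_const (c := s) (.inl (by simpa using ht))
    refine (hcpow.comp_ofReal.mul (hderiv t)).congr_deriv ?_
    simp only [id, mul_one, smul_eq_mul, add_sub_cancel_right]
    ring
  have hftc := integral_Ioi_of_hasDerivAt_of_tendsto
    ((continuousAt_ofReal_cpow_const 0 s (.inl hs)).mul
      hf.continuous.continuousAt).continuousWithinAt
    hprod (hf_int.add hf'_int) (hf.tendsto_cpow_mul hs)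
  rw [integral_add hf_int hf'_int, integral_const_mul, Pi.mul_apply, ofReal_zero,
    zero_cpow hs₀, zero_mul, sub_zero] at hftc
  rw [neg_mul]
  exact eq_neg_of_add_eq_zero_right hftc

theorem continuous_mellin_vertical (hf : RapidAtTop f) {σ : ℝ} (hσ : 0 < σ) :
    Continuous fun τ : ℝ => mellin f (σ + τ * I) :=
  continuous_iff_continuousAt.2 fun τ =>
    ContinuousAt.comp (f := fun τ : ℝ => (σ + τ * I : ℂ))
      (hf.differentiableAt_mellin (by simpa using hσ)).continuousAt (by fun_prop)

end RapidAtTop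

theorem norm_mellin_vertical_le (f : ℝ → ℂ) (σ τ : ℝ) :
    ‖mellin f (σ + τ * I)‖ ≤ ∫ t in Set.Ioi (0 : ℝ), t ^ (σ - 1) * ‖f t‖ := by
  refine (norm_integral_le_integral_norm _).trans_eq ?_
  refine setIntegral_congr_fun measurableSet_Ioi fun t ht => ?_
  simp only [norm_smul]
  rw [norm_cpow_eq_rpow_re_of_pos ht]
  simp

theorem inv_norm_sq_vertical_le {σ : ℝ} (hσ : 1 ≤ σ) (τ : ℝ) :
    (‖(σ + τ * I : ℂ)‖⁻¹) ^ 2 ≤ (1 + τ ^ 2)⁻¹ := by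
  rw [inv_pow, Complex.sq_norm, normSq_add_mul_I]
  gcongr
  nlinarith

theorem RapidAtTop.integrable_norm_sq_mellin_vertical {f f' : ℝ → ℂ} (hf : RapidAtTop f)
    (hf' : RapidAtTop f') (hderiv : ∀ t, HasDerivAt f (f' t) t) {σ : ℝ} (hσ : 1 ≤ σ) :
    Integrable fun τ : ℝ => ‖mellin f (σ + τ * I)‖ ^ 2 := by
  set K := ∫ t in Set.Ioi (0 : ℝ), t ^ (σ + 1 - 1) * ‖f' t‖
  refine (integrable_inv_one_add_sq.const_mul (K ^ 2)).mono'
    ((hf.continuous_mellin_vertical (by linarith)).norm.pow 2).aestronglyMeasurable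
    (.of_forall fun τ => ?_)
  have hre : (σ + τ * I : ℂ).re = σ := by simp
  have hpos : 0 < ‖(σ + τ * I : ℂ)‖ := norm_pos_iff.2 fun h => by
    rw [h, zero_re] at hre; linarith
  have hK : ‖mellin f (σ + τ * I)‖ ≤ K * ‖(σ + τ * I : ℂ)‖⁻¹ := by
    rw [← div_eq_mul_inv, le_div_iff₀' hpos, ← norm_neg (σ + τ * I : ℂ), ← norm_mul,
      ← hf.mellin_deriv hf' hderiv (by rw [hre]; linarith),
      show (σ + τ * I + 1 : ℂ) = (σ + 1 : ℝ) + τ * I by push_cast; ring]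
    exact norm_mellin_vertical_le f' (σ + 1) τ
  calc ‖‖mellin f (σ + τ * I)‖ ^ 2‖ ≤ (K * ‖(σ + τ * I : ℂ)‖⁻¹) ^ 2 := by
        rw [Real.norm_of_nonneg (by positivity)]
        gcongr
    _ ≤ K ^ 2 * (1 + τ ^ 2)⁻¹ := by
        rw [mul_pow]
        gcongr
        exact inv_norm_sq_vertical_le hσ τ

theorem RapidAtTop.integrableOn_Ioi {f : ℝ → ℂ} (hf : RapidAtTop f) (t : ℝ) :
    IntegrableOn f (Set.Ioi t) :=
  ((hf.continuous.locallyIntegrable.locallyIntegrableOn _).integrableOn_of_isBigO_atTop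
    (hf.isBigO 2 two_pos) (integrableAtFilter_rpow_atTop_iff.2 (by norm_num))).mono_set
    Set.Ioi_subset_Ici_self

theorem RapidAtTop.hasDerivAt_integral_Ioi {f : ℝ → ℂ} (hf : RapidAtTop f) (t : ℝ) :
    HasDerivAt (fun t => ∫ x in Set.Ioi t, f x) (-f t) t := by
  have hsplit : (fun t => ∫ x in Set.Ioi t, f x) =
      fun t => (∫ x in Set.Ioi 0, f x) - ∫ x in (0 : ℝ)..t, f x := by
    ext t
    rw [← intervalIntegral.integral_Ioi_sub_Ioi' (hf.integrableOn_Ioi 0) (hf.integrableOn_Ioi t),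
      sub_sub_cancel]
  rw [hsplit]
  exact (hf.continuous.integral_hasStrictDerivAt 0 t).hasDerivAt.const_sub _

theorem RapidAtTop.integral_Ioi {f : ℝ → ℂ} (hf : RapidAtTop f) :
    RapidAtTop fun t => ∫ x in Set.Ioi t, f x := by
  refine ⟨continuous_iff_continuousAt.2 fun t => (hf.hasDerivAt_integral_Ioi t).continuousAt,
    fun a ha => ?_⟩
  obtain ⟨C, hC⟩ := (hf.isBigO (a + 1) (by linarith)).bound
  obtain ⟨T, hT⟩ := eventually_atTop.1 hC
  refine .of_bound (C / a) ?_
  filter_upwards [eventually_gt_atTop 0, eventually_ge_atTop T] with t ht htT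
  have hint := (integrableOn_Ioi_rpow_of_lt (a := -(a + 1)) (by linarith) ht).const_mul C
  refine (norm_integral_le_of_norm_le hint ?_).trans_eq ?_
  · refine (ae_restrict_iff' measurableSet_Ioi).2 (.of_forall fun x (hx : t < x) => ?_)
    refine (hT x (htT.trans hx.le)).trans_eq ?_
    rw [Real.norm_of_nonneg (Real.rpow_nonneg (ht.trans hx).le _)]
  · rw [integral_const_mul, integral_Ioi_rpow_of_lt (by linarith) ht,
      Real.norm_of_nonneg (Real.rpow_nonneg ht.le _), show -(a + 1) + 1 = -a by ring]
    field_simp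

theorem RapidAtTop.mellin_integral_Ioi {f : ℝ → ℂ} (hf : RapidAtTop f) {s : ℂ} (hs : 0 < s.re) :
    mellin (fun t => ∫ x in Set.Ioi t, f x) s = mellin f (s + 1) / s := by
  have hs₀ : s ≠ 0 := by rintro rfl; simp at hs
  have h := hf.integral_Ioi.mellin_deriv hf.neg hf.hasDerivAt_integral_Ioi hs
  have hneg : mellin (fun t => -f t) (s + 1) = -mellin f (s + 1) := by
    simp [mellin, integral_neg]
  rw [hneg, neg_mul, neg_inj] at h
  rw [h, mul_div_cancel_left₀ _ hs₀]

theorem norm_le_of_norm_mellin_vertical_le {h : ℝ → ℂ} (hh : RapidAtTop h) {σ : ℝ} (hσ : 0 < σ)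
    {b : ℝ → ℝ} (hb : Integrable b) (hle : ∀ τ : ℝ, ‖mellin h (σ + τ * I)‖ ≤ b τ)
    {t : ℝ} (ht : 0 < t) : ‖h t‖ ≤ t ^ (-σ) * ∫ τ, b τ := by
  have hvert : VerticalIntegrable (mellin h) σ :=
    hb.mono' (hh.continuous_mellin_vertical hσ).aestronglyMeasurable (.of_forall hle)
  have hint : ‖∫ τ : ℝ, (t : ℂ) ^ (-(σ + τ * I : ℂ)) • mellin h (σ + τ * I)‖ ≤
      ∫ τ, t ^ (-σ) * b τ := by
    refine norm_integral_le_of_norm_le (hb.const_mul _) (.of_forall fun τ => ?_)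
    rw [norm_smul, norm_cpow_eq_rpow_re_of_pos ht,
      show (-(σ + τ * I : ℂ)).re = -σ by simp]
    gcongr
    exact hle τ
  have hpi : ‖(1 / (2 * Real.pi) : ℝ)‖ ≤ 1 := by
    rw [Real.norm_of_nonneg (by positivity), div_le_one (by positivity)]
    linarith [Real.pi_gt_three]
  rw [← mellinInv_mellin_eq σ h ht (hh.mellinConvergent (by simpa using hσ)) hvert
    hh.continuous.continuousAt, mellinInv, norm_smul, ← integral_const_mul]
  exact (mul_le_of_le_one_left (norm_nonneg _) hpi).trans hint

-- The primitive is used because dividing by `s` makes the Mellin transform integrable on vertical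
-- lines, with `L¹` norm controlled by the `L²` bound.
theorem RapidAtTop.norm_integral_Ioi_le {f : ℝ → ℂ} (hf : RapidAtTop f) {σ R C : ℝ} (hσ : 1 ≤ σ)
    (hR : 0 < R) (hint : Integrable fun τ : ℝ => ‖mellin f ((σ + 1 : ℝ) + τ * I)‖ ^ 2)
    (hC : ∫ τ : ℝ, ‖mellin f ((σ + 1 : ℝ) + τ * I)‖ ^ 2 ≤ C * R ^ (2 * (σ + 1)))
    {t : ℝ} (ht : 0 < t) :
    ‖∫ x in Set.Ioi t, f x‖ ≤ (t / R) ^ (-σ) * (C * R ^ 2 + Real.pi) := by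
  have hRσ : 0 < R ^ σ := Real.rpow_pos_of_pos hR σ
  refine (norm_le_of_norm_mellin_vertical_le hf.integral_Ioi (σ := σ) (by linarith)
    ((hint.const_mul (R ^ σ)⁻¹).add (integrable_inv_one_add_sq.const_mul (R ^ σ))) (fun τ => ?_)
    ht).trans ?_
  · rw [hf.mellin_integral_Ioi (by simp only [add_re, ofReal_re, re_ofReal_mul, I_re]; linarith),
      norm_div, div_eq_mul_inv,
      show (σ + τ * I + 1 : ℂ) = (σ + 1 : ℝ) + τ * I by push_cast; ring, Pi.add_apply]
    set x := ‖mellin f ((σ + 1 : ℝ) + τ * I)‖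
    set y := ‖(σ + τ * I : ℂ)‖⁻¹
    calc x * y ≤ (R ^ σ)⁻¹ * x ^ 2 + R ^ σ * y ^ 2 := by
          have hsq := mul_nonneg (inv_nonneg.2 hRσ.le) (sq_nonneg (x - R ^ σ * y))
          have hxy : 0 ≤ x * y := by positivity
          have hexp : (R ^ σ)⁻¹ * (x - R ^ σ * y) ^ 2 =
              (R ^ σ)⁻¹ * x ^ 2 + R ^ σ * y ^ 2 - 2 * (x * y) := by
            field_simp
            ring
          linarith
      _ ≤ _ := by
          gcongr
          exact inv_norm_sq_vertical_le hσ τ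
  · rw [integral_add' (hint.const_mul _) (integrable_inv_one_add_sq.const_mul _),
      integral_const_mul, integral_const_mul, integral_univ_inv_one_add_sq,
      Real.div_rpow ht.le hR.le, Real.rpow_neg hR.le, div_inv_eq_mul, mul_assoc]
    gcongr
    calc (R ^ σ)⁻¹ * (∫ τ : ℝ, ‖mellin f ((σ + 1 : ℝ) + τ * I)‖ ^ 2) + R ^ σ * Real.pi
        ≤ (R ^ σ)⁻¹ * (C * R ^ (2 * (σ + 1))) + R ^ σ * Real.pi := by gcongr
      _ = R ^ σ * (C * R ^ 2 + Real.pi) := by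
        rw [show 2 * (σ + 1) = σ + σ + (2 : ℕ) by push_cast; ring, Real.rpow_add_natCast hR.ne',
          Real.rpow_add hR]
        field_simp

theorem RapidAtTop.eq_zero_of_mellin_bound {f : ℝ → ℂ} (hf : RapidAtTop f) {C R σ₀ : ℝ}
    (hR : 0 < R) (hint : ∀ σ ≥ σ₀, Integrable fun τ : ℝ => ‖mellin f (σ + τ * I)‖ ^ 2)
    (hC : ∀ σ ≥ σ₀, ∫ τ : ℝ, ‖mellin f (σ + τ * I)‖ ^ 2 ≤ C * R ^ (2 * σ)) {t : ℝ} (ht : R < t) :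
    f t = 0 := by
  have htail (x : ℝ) (hx : R < x) : ∫ y in Set.Ioi x, f y = 0 := by
    have hlim : Tendsto (fun σ : ℝ => (x / R) ^ (-σ) * (C * R ^ 2 + Real.pi)) atTop (𝓝 0) := by
      simpa using ((tendsto_rpow_atBot_of_base_gt_one _ ((one_lt_div hR).2 hx)).comp
        tendsto_neg_atTop_atBot).mul_const (C * R ^ 2 + Real.pi)
    refine norm_le_zero_iff.1 (ge_of_tendsto hlim ?_)
    filter_upwards [eventually_ge_atTop 1, eventually_ge_atTop σ₀] with σ hσ hσ₀
    exact hf.norm_integral_Ioi_le hσ hR (hint _ (by linarith)) (hC _ (by linarith)) (hR.trans hx)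
  have hconst : HasDerivAt (fun x => ∫ y in Set.Ioi x, f y) 0 t := by
    refine (hasDerivAt_const t (0 : ℂ)).congr_of_eventuallyEq ?_
    filter_upwards [lt_mem_nhds ht] with x hx using htail x hx
  exact neg_eq_zero.1 ((hf.hasDerivAt_integral_Ioi t).unique hconst)

end MellinPaleyWiener

section GaussianMellin

/-- The exponential of the quadratic polynomial `βu - au²/2`. Its Mellin transform is the integral
representation of the parabolic cylinder functions, in which the generalized eigenfunctions
`chiE` are expressed. -/
noncomputable def gaussExp (β a : ℂ) (u : ℝ) : ℂ := cexp (β * u - a * (u : ℂ) ^ 2 / 2)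

theorem continuous_gaussExp (β a : ℂ) : Continuous (gaussExp β a) := by
  unfold gaussExp
  fun_prop

theorem norm_gaussExp (β a : ℂ) (u : ℝ) :
    ‖gaussExp β a u‖ = Real.exp (β.re * u - a.re * u ^ 2 / 2) := by
  rw [gaussExp, norm_exp, sub_re, re_mul_ofReal, ← ofReal_pow, div_ofNat_re, re_mul_ofReal]

theorem norm_gaussExp_le_one {β a : ℂ} (hβ : β.re = 0) (ha : 0 ≤ a.re) (u : ℝ) :
    ‖gaussExp β a u‖ ≤ 1 := by
  rw [norm_gaussExp, hβ, Real.exp_le_one_iff]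
  nlinarith [mul_nonneg ha (sq_nonneg u)]

theorem rapidAtTop_gaussExp (β : ℂ) {a : ℂ} (ha : 0 < a.re) : RapidAtTop (gaussExp β a) := by
  refine ⟨continuous_gaussExp β a, fun r _ => ?_⟩
  refine (cexp_neg_quadratic_isLittleO_rpow_atTop (a := -(a / 2)) ?_ β (-r)).isBigO.congr_left
    fun u => ?_
  · simpa using ha
  · rw [gaussExp]
    ring_nf

theorem norm_gaussExp_mul_le {β β' a : ℂ} {c : ℝ} (hβ : β'.re ≤ β.re + 1) (ha : c ≤ a.re) {u : ℝ}
    (hu : 0 ≤ u) : ‖gaussExp β' a u‖ * (u + u ^ 2 / 2) ≤ ‖gaussExp (β + 2) c u‖ := by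
  have hquad : u + u ^ 2 / 2 ≤ Real.exp u := by linarith [Real.quadratic_le_exp_of_nonneg hu]
  refine (mul_le_mul_of_nonneg_left hquad (norm_nonneg _)).trans ?_
  rw [norm_gaussExp, norm_gaussExp, ← Real.exp_add, add_re, ofReal_re, re_ofNat]
  gcongr
  nlinarith [mul_le_mul_of_nonneg_right hβ hu, mul_le_mul_of_nonneg_right ha (sq_nonneg u)]

theorem hasFDerivAt_gaussExp (p : ℂ × ℂ) (u : ℝ) :
    HasFDerivAt (fun p : ℂ × ℂ => gaussExp p.1 p.2 u)
      (gaussExp p.1 p.2 u • ((u : ℂ) • ContinuousLinearMap.fst ℂ ℂ ℂ -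
        ((u : ℂ) ^ 2 / 2) • ContinuousLinearMap.snd ℂ ℂ ℂ)) p := by
  have h := ((hasFDerivAt_fst (𝕜 := ℂ) (p := p)).mul_const (u : ℂ)).sub
    ((hasFDerivAt_snd (𝕜 := ℂ) (p := p)).mul_const ((u : ℂ) ^ 2 / 2))
  simpa only [gaussExp, mul_div_assoc, Pi.sub_apply] using h.cexp

theorem differentiableAt_mellin_gaussExp {S : ℂ} (hS : 0 < S.re) {p : ℂ × ℂ} (hp : 0 < p.2.re) :
    DifferentiableAt ℂ (fun p : ℂ × ℂ => mellin (gaussExp p.1 p.2) S) p := by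
  have hpow : ContinuousOn (fun u : ℝ => (u : ℂ) ^ (S - 1)) (Set.Ioi 0) := fun u hu =>
    (continuousAt_ofReal_cpow_const u _ (.inr (ne_of_gt hu))).continuousWithinAt
  have hfst : ∀ᶠ p' : ℂ × ℂ in 𝓝 p, p'.1.re < p.1.re + 1 :=
    (by fun_prop : Continuous fun p' : ℂ × ℂ => p'.1.re).tendsto p |>.eventually_lt_const
      (by linarith)
  have hsnd : ∀ᶠ p' : ℂ × ℂ in 𝓝 p, p.2.re / 2 < p'.2.re :=
    (by fun_prop : Continuous fun p' : ℂ × ℂ => p'.2.re).tendsto p |>.eventually_const_lt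
      (by linarith)
  refine (hasFDerivAt_integral_of_dominated_of_fderiv_le (𝕜 := ℂ)
    (F := fun p (u : ℝ) => (u : ℂ) ^ (S - 1) • gaussExp p.1 p.2 u) (x₀ := p)
    (μ := volume.restrict (Set.Ioi 0))
    (bound := fun u : ℝ => ‖(u : ℂ) ^ (S - 1) • gaussExp (p.1 + 2) (p.2.re / 2 : ℝ) u‖)
    (hfst.and hsnd) (.of_forall fun p' => ?_)
    ((rapidAtTop_gaussExp p.1 hp).mellinConvergent hS) ?_ ?_
    ((rapidAtTop_gaussExp _ (by simpa using hp)).mellinConvergent hS).norm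
    (.of_forall fun u p' _ => (hasFDerivAt_gaussExp p' u).fun_const_smul _)).differentiableAt
  · exact (hpow.smul (continuous_gaussExp _ _).continuousOn).aestronglyMeasurable measurableSet_Ioi
  · have hcont := continuous_gaussExp p.1 p.2
    exact (hpow.smul (by fun_prop)).aestronglyMeasurable measurableSet_Ioi
  · refine (ae_restrict_iff' measurableSet_Ioi).2 (.of_forall fun u (hu : 0 < u) p' hp' => ?_)
    have hlin : ‖(u : ℂ) • ContinuousLinearMap.fst ℂ ℂ ℂ -
        ((u : ℂ) ^ 2 / 2) • ContinuousLinearMap.snd ℂ ℂ ℂ‖ ≤ u + u ^ 2 / 2 := by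
      refine (norm_sub_le _ _).trans ?_
      rw [norm_smul, norm_smul, norm_div, norm_pow, norm_real, Real.norm_of_nonneg hu.le]
      have h₁ := ContinuousLinearMap.norm_fst_le ℂ ℂ ℂ
      have h₂ := ContinuousLinearMap.norm_snd_le ℂ ℂ ℂ
      simp only [RCLike.norm_ofNat]
      nlinarith [sq_nonneg u]
    rw [norm_smul, norm_smul, norm_smul]
    gcongr
    exact (mul_le_mul_of_nonneg_left hlin (norm_nonneg _)).trans
      (norm_gaussExp_mul_le hp'.1.le hp'.2.le hu.le)

theorem exp_mul_mellin_gaussExp_ofReal (S β : ℂ) (x : ℝ) :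
    cexp (S * x) * mellin (gaussExp (cexp x * β) (cexp (2 * x))) S = mellin (gaussExp β 1) S := by
  have hscale : gaussExp (cexp x * β) (cexp (2 * x)) = fun u => gaussExp β 1 (Real.exp x * u) := by
    ext u
    rw [gaussExp, gaussExp, two_mul, Complex.exp_add]
    push_cast
    ring_nf
  rw [hscale, mellin_comp_mul_left _ _ (Real.exp_pos x), smul_eq_mul, ← mul_assoc, ofReal_exp,
    cpow_def_of_ne_zero (Complex.exp_ne_zero _), ← ofReal_exp, ← ofReal_log (Real.exp_pos x).le,
    Real.log_exp, ← Complex.exp_add]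
  ring_nf
  simp

-- The rotation of the contour `u ↦ e^w u`, by the identity theorem in `w` rather than Cauchy.
theorem exp_mul_mellin_gaussExp {S : ℂ} (hS : 0 < S.re) (β : ℂ) {w : ℂ}
    (hw : w.im ∈ Set.Ioo (-(Real.pi / 4)) (Real.pi / 4)) :
    cexp (S * w) * mellin (gaussExp (cexp w * β) (cexp (2 * w))) S = mellin (gaussExp β 1) S := by
  set strip : Set ℂ := im ⁻¹' Set.Ioo (-(Real.pi / 4)) (Real.pi / 4)
  have hopen : IsOpen strip := isOpen_Ioo.preimage continuous_im
  have hconv : Convex ℝ strip := (convex_Ioo _ _).linear_preimage imLm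
  have hdiff : DifferentiableOn ℂ
      (fun w => cexp (S * w) * mellin (gaussExp (cexp w * β) (cexp (2 * w))) S) strip := by
    intro w hw
    have hre : 0 < (cexp (2 * w)).re := by
      have him : (2 * w).im = 2 * w.im := by simp
      rw [exp_re, him]
      exact mul_pos (Real.exp_pos _)
        (Real.cos_pos_of_mem_Ioo ⟨by linarith [hw.1], by linarith [hw.2]⟩)
    refine (DifferentiableAt.mul (by fun_prop) ?_).differentiableWithinAt
    exact (differentiableAt_mellin_gaussExp hS (p := (cexp w * β, cexp (2 * w))) hre).comp w
      (f := fun w => (cexp w * β, cexp (2 * w))) (by fun_prop)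
  have hreal : Tendsto ((↑) : ℝ → ℂ) (𝓝[≠] 0) (𝓝[≠] 0) :=
    tendsto_nhdsWithin_iff.2 ⟨(continuous_ofReal.tendsto' 0 0 ofReal_zero).mono_left
      nhdsWithin_le_nhds, by filter_upwards [self_mem_nhdsWithin] with x hx using by simpa using hx⟩
  exact (hdiff.analyticOnNhd hopen).eqOn_of_preconnected_of_frequently_eq analyticOnNhd_const
    hconv.isPreconnected (by simp [strip, Real.pi_pos])
    (hreal.frequently (.of_forall (exp_mul_mellin_gaussExp_ofReal S β))) hw

theorem RapidAtTop.integrableOn_Ioi_one_cpow_smul {f : ℝ → ℂ} (hf : RapidAtTop f) (T : ℂ) :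
    IntegrableOn (fun u : ℝ => (u : ℂ) ^ (T - 1) • f u) (Set.Ioi 1) := by
  have hcont : ContinuousOn (fun u : ℝ => (u : ℂ) ^ (T - 1) • f u) (Set.Ioi 1) := fun u hu =>
    ((continuousAt_ofReal_cpow_const u _ (.inr (one_pos.trans hu).ne')).smul
      hf.continuous.continuousAt).continuousWithinAt
  have hint := hf.mellinConvergent (s := (|T.re| + 1 : ℝ))
    (by rw [ofReal_re]; positivity)
  refine Integrable.mono (hint.mono_set (Set.Ioi_subset_Ioi zero_le_one))
    (hcont.aestronglyMeasurable measurableSet_Ioi)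
    ((ae_restrict_iff' measurableSet_Ioi).2 (.of_forall fun u (hu : 1 < u) => ?_))
  have hu₀ : 0 < u := one_pos.trans hu
  have hre : (T - 1).re ≤ (((|T.re| + 1 : ℝ) : ℂ) - 1).re := by
    rw [sub_re, sub_re, one_re, ofReal_re]
    linarith [le_abs_self T.re]
  rw [norm_smul, norm_smul, norm_cpow_eq_rpow_re_of_pos hu₀, norm_cpow_eq_rpow_re_of_pos hu₀]
  exact mul_le_mul_of_nonneg_right (Real.rpow_le_rpow_of_exponent_le hu.le hre) (norm_nonneg _)

theorem norm_cpow_smul_gaussExp_le {β a : ℂ} (hβ : β.re = 0) (ha : 0 ≤ a.re) (T : ℂ) {u : ℝ}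
    (hu : 0 < u) : ‖(u : ℂ) ^ (T - 1) • gaussExp β a u‖ ≤ u ^ (T.re - 1) := by
  rw [norm_smul, norm_cpow_eq_rpow_re_of_pos hu, sub_re, one_re]
  exact mul_le_of_le_one_right (Real.rpow_nonneg hu.le _) (norm_gaussExp_le_one hβ ha u)

theorem norm_integral_Ioc_cpow_smul_gaussExp_le {β a : ℂ} (hβ : β.re = 0) (ha : 0 ≤ a.re) {T : ℂ}
    (hT : 0 < T.re) :
    ‖∫ u in Set.Ioc (0 : ℝ) 1, (u : ℂ) ^ (T - 1) • gaussExp β a u‖ ≤ T.re⁻¹ := by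
  have hint : IntegrableOn (fun u : ℝ => u ^ (T.re - 1)) (Set.Ioc 0 1) :=
    (intervalIntegrable_iff_integrableOn_Ioc_of_le zero_le_one).1
      (intervalIntegral.intervalIntegrable_rpow' (by linarith))
  refine (norm_integral_le_of_norm_le hint ((ae_restrict_iff' measurableSet_Ioc).2
    (.of_forall fun u hu => norm_cpow_smul_gaussExp_le hβ ha T hu.1))).trans_eq ?_
  rw [← intervalIntegral.integral_of_le zero_le_one, integral_rpow (.inl (by linarith)),
    sub_add_cancel, Real.one_rpow, Real.zero_rpow hT.ne', sub_zero, one_div]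

theorem norm_integral_Ioi_cpow_smul_gaussExp_le {β a : ℂ} (hβ : β.re = 0) (ha : 0 ≤ a.re) {T : ℂ}
    (hT : T.re < 0) :
    ‖∫ u in Set.Ioi (1 : ℝ), (u : ℂ) ^ (T - 1) • gaussExp β a u‖ ≤ (-T.re)⁻¹ := by
  refine (norm_integral_le_of_norm_le
    (integrableOn_Ioi_rpow_of_lt (a := T.re - 1) (by linarith) one_pos)
    ((ae_restrict_iff' measurableSet_Ioi).2 (.of_forall fun u hu =>
      norm_cpow_smul_gaussExp_le hβ ha T (one_pos.trans hu)))).trans_eq ?_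
  rw [integral_Ioi_rpow_of_lt (by linarith) one_pos, sub_add_cancel, Real.one_rpow, neg_div,
    ← div_neg, one_div]

theorem hasDerivAt_cpow_smul_gaussExp (β a T : ℂ) {u : ℝ} (hu : 0 < u) :
    HasDerivAt (fun u : ℝ => (u : ℂ) ^ (T - 1 - 1) • gaussExp β a u)
      ((T - 2) * ((u : ℂ) ^ (T - 2 - 1) • gaussExp β a u) +
        β * ((u : ℂ) ^ (T - 1 - 1) • gaussExp β a u) -
        a * ((u : ℂ) ^ (T - 1) • gaussExp β a u)) u := by
  have hu₀ : (u : ℂ) ≠ 0 := ofReal_ne_zero.2 hu.ne'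
  have hpow := (hasDerivAt_id' (u : ℂ)).cpow_const (c := T - 1 - 1) (by simpa using hu)
  have hexp := (((hasDerivAt_id' (u : ℂ)).const_mul β).sub
    ((((hasDerivAt_id' (u : ℂ)).pow 2).const_mul a).div_const 2)).cexp
  refine (hpow.mul hexp).comp_ofReal.congr_deriv ?_
  have h₁ : (u : ℂ) ^ (T - 1 - 1) = (u : ℂ) ^ (T - 2 - 1) * u := by
    rw [show T - 1 - 1 = T - 2 - 1 + 1 by ring, cpow_add _ _ hu₀, cpow_one]
  have h₂ : (u : ℂ) ^ (T - 1) = (u : ℂ) ^ (T - 2 - 1) * u ^ 2 := by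
    rw [← cpow_ofNat, ← cpow_add _ _ hu₀]
    ring_nf
  rw [h₁, h₂, show T - 1 - 1 - 1 = T - 2 - 1 by ring]
  simp [gaussExp]
  ring

-- The powers of `u` gained on the right make those integrals bounded uniformly as `a.re` tends
-- to `0`.
theorem mul_integral_Ioi_cpow_smul_gaussExp (β : ℂ) {a : ℂ} (ha : 0 < a.re) (T : ℂ) :
    a * ∫ u in Set.Ioi (1 : ℝ), (u : ℂ) ^ (T - 1) • gaussExp β a u =
      gaussExp β a 1 +
        (β * (∫ u in Set.Ioi (1 : ℝ), (u : ℂ) ^ (T - 1 - 1) • gaussExp β a u) +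
        (T - 2) * ∫ u in Set.Ioi (1 : ℝ), (u : ℂ) ^ (T - 2 - 1) • gaussExp β a u) := by
  have hint := (rapidAtTop_gaussExp β ha).integrableOn_Ioi_one_cpow_smul
  have h₀ := (hint T).const_mul a
  have h₁ := (hint (T - 1)).const_mul β
  have h₂ := (hint (T - 2)).const_mul (T - 2)
  have hderiv (u : ℝ) (hu : 1 ≤ u) := hasDerivAt_cpow_smul_gaussExp β a T (one_pos.trans_le hu)
  have hftc := integral_Ioi_of_hasDerivAt_of_tendsto' hderiv ((h₂.add h₁).sub h₀)
    (tendsto_zero_of_hasDerivAt_of_integrableOn_Ioi (fun u hu => hderiv u (le_of_lt hu))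
      ((h₂.add h₁).sub h₀) (hint (T - 1)))
  replace hftc := (integral_sub (h₂.add h₁) h₀).symm.trans hftc
  rw [integral_add' h₂ h₁, integral_const_mul, integral_const_mul, integral_const_mul,
    ofReal_one, one_cpow, one_smul] at hftc
  linear_combination -hftc

theorem norm_mellin_gaussExp_le {β a S : ℂ} (hβ : β.re = 0) (ha : 0 < a.re) (hS₀ : 0 < S.re)
    (hS₁ : S.re < 1) :
    ‖mellin (gaussExp β a) S‖ ≤
      S.re⁻¹ + (1 + (‖β‖ * (1 - S.re)⁻¹ + ‖S - 2‖ * (2 - S.re)⁻¹)) / ‖a‖ := by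
  have hint := (rapidAtTop_gaussExp β ha).mellinConvergent hS₀
  have hnorm_a : 0 < ‖a‖ := norm_pos_iff.2 fun h => by simp [h] at ha
  have htail : ‖∫ u in Set.Ioi (1 : ℝ), (u : ℂ) ^ (S - 1) • gaussExp β a u‖ ≤
      (1 + (‖β‖ * (1 - S.re)⁻¹ + ‖S - 2‖ * (2 - S.re)⁻¹)) / ‖a‖ := by
    rw [le_div_iff₀' hnorm_a, ← norm_mul, mul_integral_Ioi_cpow_smul_gaussExp β ha]
    have h₁ := norm_integral_Ioi_cpow_smul_gaussExp_le hβ ha.le (T := S - 1) (by simpa using hS₁)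
    have h₂ := norm_integral_Ioi_cpow_smul_gaussExp_le hβ ha.le (T := S - 2)
      (by simp only [sub_re, re_ofNat]; linarith)
    simp only [sub_re, one_re, re_ofNat, neg_sub] at h₁ h₂
    refine (norm_add_le _ _).trans (add_le_add (norm_gaussExp_le_one hβ ha.le 1)
      ((norm_add_le _ _).trans ?_))
    rw [norm_mul, norm_mul]
    gcongr
  rw [mellin, ← Set.Ioc_union_Ioi_eq_Ioi (zero_le_one (α := ℝ)),
    setIntegral_union (Set.Ioc_disjoint_Ioi le_rfl) measurableSet_Ioi
      (hint.mono_set Set.Ioc_subset_Ioi_self) (hint.mono_set (Set.Ioi_subset_Ioi zero_le_one))]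
  exact (norm_add_le _ _).trans
    (add_le_add (norm_integral_Ioc_cpow_smul_gaussExp_le hβ ha.le hS₀) htail)

end GaussianMellin

section Schwartz

theorem exists_schwartzMap_comp_mul_left (f : 𝓢(ℝ, ℂ)) {κ : ℝ} (hκ : κ ≠ 0) :
    ∃ g : 𝓢(ℝ, ℂ), ∀ t, g t = f (κ * t) :=
  ⟨SchwartzMap.compCLMOfContinuousLinearEquiv ℂ
    (ContinuousLinearEquiv.unitsEquivAut ℝ (Units.mk0 κ hκ)) f, fun t => by
      simp [mul_comm κ]⟩

theorem iteratedDeriv_cexp_ofReal_mul_I (n : ℕ) :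
    iteratedDeriv n (fun x : ℝ => cexp (x * I)) = fun x : ℝ => I ^ n * cexp (x * I) := by
  induction n with
  | zero => simp
  | succ n ih =>
    rw [iteratedDeriv_succ, ih]
    ext x
    refine ((((hasDerivAt_id' (x : ℂ)).mul_const I).cexp.const_mul
      (I ^ n)).comp_ofReal.deriv).trans ?_
    ring

theorem hasTemperateGrowth_cexp_ofReal_mul_I :
    Function.HasTemperateGrowth fun x : ℝ => cexp (x * I) := by
  refine ⟨(ofRealCLM.contDiff.mul contDiff_const).cexp, fun n => ⟨0, 1, fun x => ?_⟩⟩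
  simp [norm_iteratedFDeriv_eq_norm_iteratedDeriv, iteratedDeriv_cexp_ofReal_mul_I,
    norm_exp_ofReal_mul_I]

theorem hasTemperateGrowth_gaussExp_zero {a : ℂ} (ha : a.re = 0) :
    Function.HasTemperateGrowth (gaussExp 0 a) := by
  have hquad : Function.HasTemperateGrowth fun u : ℝ => -(a.im / 2) * u ^ 2 := by fun_prop
  convert hasTemperateGrowth_cexp_ofReal_mul_I.comp hquad using 1
  ext u
  have hexp : 0 * (u : ℂ) - a * (u : ℂ) ^ 2 / 2 = ((-(a.im / 2) * u ^ 2 : ℝ) : ℂ) * I := by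
    rw [← re_add_im a, ha]
    simp
    ring
  rw [gaussExp, hexp, Function.comp_apply]

theorem exists_schwartzMap_gaussExp_mul (f : 𝓢(ℝ, ℂ)) {a : ℂ} (ha : a.re = 0) :
    ∃ g : 𝓢(ℝ, ℂ), ∀ t, g t = gaussExp 0 a t * f t :=
  ⟨SchwartzMap.smulLeftCLM ℂ (gaussExp 0 a) f,
    SchwartzMap.smulLeftCLM_apply_apply (hasTemperateGrowth_gaussExp_zero ha) f⟩

end Schwartz

section RotatedGaussianMellin

theorem fourierInv_apply_eq_integral_cexp (f : 𝓢(ℝ, ℂ)) (ξ : ℝ) :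
    𝓕⁻ f ξ = ∫ q : ℝ, cexp (2 * Real.pi * q * ξ * I) * f q := by
  rw [SchwartzMap.fourierInv_coe, Real.fourierInv_eq']
  congr 1 with q
  simp [mul_comm ξ, mul_assoc]

theorem gaussExp_add (β γ a : ℂ) (u : ℝ) :
    gaussExp (β + γ) a u = cexp (β * u) * gaussExp γ a u := by
  rw [gaussExp, gaussExp, ← Complex.exp_add]
  ring_nf

theorem integral_mul_mellin_gaussExp (f : 𝓢(ℝ, ℂ)) (κ : ℝ) {S a : ℂ} (hS : 0 < S.re)
    (ha : 0 < a.re) :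
    ∫ q : ℝ, f q * mellin (gaussExp (2 * Real.pi * κ * q * I) a) S =
      mellin (fun t => gaussExp 0 a t * 𝓕⁻ f (κ * t)) S := by
  have hexp (q t : ℝ) : gaussExp (2 * Real.pi * κ * q * I) a t =
      cexp (2 * Real.pi * κ * q * I * t) * gaussExp 0 a t := by
    rw [← gaussExp_add, add_zero]
  have hprod : Integrable (fun p : ℝ × ℝ => cexp (2 * Real.pi * κ * p.1 * I * p.2) *
      (f p.1 * ((p.2 : ℂ) ^ (S - 1) • gaussExp 0 a p.2)))
      (volume.prod (volume.restrict (Set.Ioi 0))) := by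
    refine ((f.integrable (μ := volume)).mul_prod
      ((rapidAtTop_gaussExp 0 ha).mellinConvergent hS)).bdd_mul (c := 1)
      (Continuous.aestronglyMeasurable (by fun_prop)) (.of_forall fun p => le_of_eq ?_)
    rw [← norm_exp_ofReal_mul_I (2 * Real.pi * κ * p.1 * p.2)]
    push_cast
    ring_nf
  calc ∫ q : ℝ, f q * mellin (gaussExp (2 * Real.pi * κ * q * I) a) S
      = ∫ q : ℝ, ∫ t in Set.Ioi (0 : ℝ), cexp (2 * Real.pi * κ * q * I * t) *
          (f q * ((t : ℂ) ^ (S - 1) • gaussExp 0 a t)) := by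
        congr 1 with q
        rw [mellin, ← integral_const_mul]
        congr 1 with t
        rw [hexp, smul_eq_mul, smul_eq_mul]
        ring
    _ = ∫ t in Set.Ioi (0 : ℝ), ∫ q : ℝ, cexp (2 * Real.pi * κ * q * I * t) *
          (f q * ((t : ℂ) ^ (S - 1) • gaussExp 0 a t)) := integral_integral_swap hprod
    _ = mellin (fun t => gaussExp 0 a t * 𝓕⁻ f (κ * t)) S := by
        rw [mellin]
        congr 1 with t
        rw [fourierInv_apply_eq_integral_cexp, ← integral_const_mul, ← integral_smul]
        congr 1 with q
        push_cast
        rw [smul_eq_mul, smul_eq_mul]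
        ring_nf

theorem continuousOn_mellin_gaussExp_mul {g : ℝ → ℂ} {S : ℂ} (hg : MellinConvergent g S) :
    ContinuousOn (fun a => mellin (fun t => gaussExp 0 a t * g t) S) {a : ℂ | 0 ≤ a.re} := by
  simp only [mellin, smul_eq_mul, mul_left_comm _ (gaussExp _ _ _)]
  refine continuousOn_of_dominated
    (F := fun (a : ℂ) (t : ℝ) => gaussExp 0 a t * ((t : ℂ) ^ (S - 1) * g t))
    (bound := fun t : ℝ => ‖(t : ℂ) ^ (S - 1) • g t‖)
    (fun a _ => (continuous_gaussExp 0 a).aestronglyMeasurable.mul hg.1)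
    (fun a ha => .of_forall fun t => ?_) hg.norm
    (.of_forall fun t => by unfold gaussExp; fun_prop)
  rw [norm_mul]
  exact mul_le_of_le_one_left (norm_nonneg _) (norm_gaussExp_le_one zero_re ha t)

theorem mellin_gaussExp_exp_mul_I {S : ℂ} (hS : 0 < S.re) (β : ℂ) {θ : ℝ}
    (hθ : θ ∈ Set.Ioo (-(Real.pi / 4)) (Real.pi / 4)) :
    mellin (gaussExp β (cexp (2 * (θ * I)))) S =
      cexp (-S * (θ * I)) * mellin (gaussExp (cexp (-(θ * I)) * β) 1) S := by
  have hrot := exp_mul_mellin_gaussExp hS (cexp (-(θ * I)) * β) (w := θ * I) (by simpa using hθ)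
  rw [← mul_assoc (cexp (θ * I)), ← Complex.exp_add, add_neg_cancel, Complex.exp_zero,
    one_mul] at hrot
  rw [← hrot, ← mul_assoc (cexp _), ← Complex.exp_add, neg_mul, neg_add_cancel, Complex.exp_zero,
    one_mul]

theorem continuous_mellin_gaussExp_left {S : ℂ} (hS : 0 < S.re) :
    Continuous fun β => mellin (gaussExp β 1) S :=
  continuous_iff_continuousAt.2 fun β =>
    ContinuousAt.comp (f := fun β : ℂ => (β, (1 : ℂ)))
      (differentiableAt_mellin_gaussExp hS (p := (β, 1)) (by simp)).continuousAt (by fun_prop)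

theorem exp_two_mul_I_re_pos {θ : ℝ} (hθ : θ ∈ Set.Ioo (-(Real.pi / 4)) (Real.pi / 4)) :
    0 < (cexp (2 * (θ * I))).re := by
  rw [show 2 * (θ * I) = ((2 * θ : ℝ) : ℂ) * I by push_cast; ring, exp_ofReal_mul_I_re]
  exact Real.cos_pos_of_mem_Ioo ⟨by linarith [hθ.1], by linarith [hθ.2]⟩

theorem tendsto_integral_mul_mellin_gaussExp (f : 𝓢(ℝ, ℂ)) (κ : ℝ) {S : ℂ} (hS₀ : 0 < S.re)
    (hS₁ : S.re < 1) :
    Tendsto (fun θ : ℝ => ∫ q : ℝ, f q * mellin (gaussExp (2 * Real.pi * κ * q * I)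
        (cexp (2 * (θ * I)))) S) (𝓝[<] (Real.pi / 4))
      (𝓝 (∫ q : ℝ, f q * (cexp (-S * ((Real.pi / 4 : ℝ) * I)) *
        mellin (gaussExp (cexp (-((Real.pi / 4 : ℝ) * I)) * (2 * Real.pi * κ * q * I)) 1) S))) := by
  have hθ : ∀ᶠ θ in 𝓝[<] (Real.pi / 4), θ ∈ Set.Ioo (-(Real.pi / 4)) (Real.pi / 4) :=
    Ioo_mem_nhdsLT (by linarith [Real.pi_pos])
  have hcont := continuous_mellin_gaussExp_left hS₀
  set K := S.re⁻¹ + (1 + ‖S - 2‖ * (2 - S.re)⁻¹)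
  set L := 2 * Real.pi * |κ| * (1 - S.re)⁻¹
  have hbound : Integrable fun q : ℝ => K * ‖f q‖ + L * (‖q‖ ^ 1 * ‖f q‖) :=
    (f.integrable.norm.const_mul _).add ((f.integrable_pow_mul volume 1).const_mul _)
  refine (tendsto_integral_filter_of_dominated_convergence (F := fun (θ q : ℝ) =>
      f q * (cexp (-S * (θ * I)) *
        mellin (gaussExp (cexp (-(θ * I)) * (2 * Real.pi * κ * q * I)) 1) S))
    _ (.of_forall fun θ => ?_) ?_ hbound (.of_forall fun q => ?_)).congr' ?_
  · exact (f.continuous.mul (continuous_const.mul (hcont.comp (by fun_prop)))).aestronglyMeasurable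
  · filter_upwards [hθ] with θ hθ
    refine .of_forall fun q => ?_
    rw [← mellin_gaussExp_exp_mul_I hS₀ _ hθ, norm_mul]
    have hmellin := norm_mellin_gaussExp_le (β := 2 * Real.pi * κ * q * I) (by simp)
      (exp_two_mul_I_re_pos hθ) hS₀ hS₁
    have hnorm : ‖cexp (2 * (θ * I))‖ = 1 := by
      rw [← mul_assoc, ← ofReal_ofNat, ← ofReal_mul, norm_exp_ofReal_mul_I]
    have hβ : ‖2 * Real.pi * κ * q * I‖ = 2 * Real.pi * |κ| * |q| := by
      simp [abs_of_pos Real.pi_pos]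
    rw [hnorm, hβ, div_one] at hmellin
    refine (mul_le_mul_of_nonneg_left hmellin (norm_nonneg _)).trans_eq ?_
    rw [Real.norm_eq_abs, pow_one]
    ring
  · refine Tendsto.mono_left (Continuous.tendsto ?_ _) nhdsWithin_le_nhds
    have := hcont.comp (f := fun θ : ℝ => cexp (-(θ * I)) * (2 * Real.pi * κ * q * I)) (by fun_prop)
    fun_prop
  · filter_upwards [hθ] with θ hθ
    simp only [mellin_gaussExp_exp_mul_I hS₀ _ hθ]

theorem tendsto_exp_two_mul_I_nhdsLT_pi_div_four :
    Tendsto (fun θ : ℝ => cexp (2 * (θ * I))) (𝓝[<] (Real.pi / 4)) (𝓝[{a : ℂ | 0 ≤ a.re}] I) := by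
  refine tendsto_nhdsWithin_iff.2 ⟨?_, ?_⟩
  · refine (Continuous.tendsto' (by fun_prop) _ _ ?_).mono_left nhdsWithin_le_nhds
    rw [ofReal_div, ofReal_ofNat, show (2 : ℂ) * (Real.pi / 4 * I) = Real.pi / 2 * I by ring,
      exp_pi_div_two_mul_I]
  · filter_upwards [Ioo_mem_nhdsLT (neg_lt_self (div_pos Real.pi_pos four_pos))] with θ hθ
    exact (exp_two_mul_I_re_pos hθ).le

theorem integral_mul_mellin_gaussExp_rotated (f : 𝓢(ℝ, ℂ)) {κ : ℝ} (hκ : κ ≠ 0) {S : ℂ}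
    (hS₀ : 0 < S.re) (hS₁ : S.re < 1) :
    ∫ q : ℝ, f q * mellin (gaussExp (cexp (Real.pi / 4 * I) * (2 * Real.pi * κ * q)) 1) S =
      cexp (S * (Real.pi / 4 * I)) *
        mellin (fun t => gaussExp 0 I t * 𝓕⁻ f (κ * t)) S := by
  obtain ⟨g, hg⟩ := exists_schwartzMap_comp_mul_left (𝓕⁻ f) hκ
  have hpath := tendsto_exp_two_mul_I_nhdsLT_pi_div_four
  have hcont := (continuousOn_mellin_gaussExp_mul
    ((RapidAtTop.of_schwartzMap g).mellinConvergent hS₀) I (by simp)).tendsto.comp hpath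
  have hparseval : ∀ᶠ θ : ℝ in 𝓝[<] (Real.pi / 4),
      mellin (fun t => gaussExp 0 (cexp (2 * (θ * I))) t * g t) S =
        ∫ q : ℝ, f q * mellin (gaussExp (2 * Real.pi * κ * q * I) (cexp (2 * (θ * I)))) S := by
    filter_upwards [Ioo_mem_nhdsLT (neg_lt_self (div_pos Real.pi_pos four_pos))] with θ hθ
    simp_rw [hg]
    exact (integral_mul_mellin_gaussExp f κ hS₀ (exp_two_mul_I_re_pos hθ)).symm
  have hlim := tendsto_nhds_unique (hcont.congr' hparseval)
    (tendsto_integral_mul_mellin_gaussExp f κ hS₀ hS₁)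
  have hI : cexp (-(Real.pi / 4 * I)) * I = cexp (Real.pi / 4 * I) := by
    nth_rw 2 [← exp_pi_div_two_mul_I]
    rw [← Complex.exp_add]
    ring_nf
  have hβ (q : ℝ) : cexp (-((Real.pi / 4 : ℝ) * I)) * (2 * Real.pi * κ * q * I) =
      cexp (Real.pi / 4 * I) * (2 * Real.pi * κ * q) := by
    rw [← hI]
    push_cast
    ring
  simp_rw [hβ, mul_left_comm (f _), integral_const_mul, hg] at hlim
  rw [hlim, ← mul_assoc, ← Complex.exp_add]
  push_cast
  simp

end RotatedGaussianMellin

section LowerHalfPlane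

/-- The product of the values of `D` at the images of `z + w` under the four rotations by multiples
of a right angle about `z`. If `D` vanishes on one side of a square centred at `z`, then this
product vanishes on all four sides. -/
def rotationProduct (D : ℂ → ℂ) (z w : ℂ) : ℂ :=
  D (z + w) * D (z + I * w) * (D (z - w) * D (z - I * w))

variable {D D' : ℂ → ℂ} {z : ℂ}

theorem diffContOnCl_rotationProduct (hc : ContinuousOn D {z | z.im ≤ 0})
    (hd : DifferentiableOn ℂ D {z | z.im < 0}) (hz : z.im < 0) :
    DiffContOnCl ℂ (rotationProduct D z) (Set.Ioo z.im (-z.im) ×ℂ Set.Ioo z.im (-z.im)) := by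
  constructor
  · refine ((hd.comp (by fun_prop) ?_).mul (hd.comp (by fun_prop) ?_)).mul
      ((hd.comp (by fun_prop) ?_).mul (hd.comp (by fun_prop) ?_))
    all_goals
      rintro w ⟨⟨_, _⟩, _, _⟩
      simp
      linarith
  · rw [closure_reProdIm, closure_Ioo (by linarith)]
    refine ((hc.comp (by fun_prop) ?_).mul (hc.comp (by fun_prop) ?_)).mul
      ((hc.comp (by fun_prop) ?_).mul (hc.comp (by fun_prop) ?_))
    all_goals
      rintro w ⟨⟨_, _⟩, _, _⟩
      simp
      linarith

theorem rotationProduct_eq_zero_of_mem_frontier (hD : ∀ x : ℝ, D x = 0) (hz : z.im < 0) {w : ℂ}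
    (hw : w ∈ frontier (Set.Ioo z.im (-z.im) ×ℂ Set.Ioo z.im (-z.im))) :
    rotationProduct D z w = 0 := by
  have hD' {v : ℂ} (hv : v.im = 0) : D v = 0 := by
    rw [← re_add_im v, hv, ofReal_zero, zero_mul, add_zero, hD]
  rw [frontier_reProdIm, frontier_Ioo (by linarith)] at hw
  rw [rotationProduct]
  obtain ⟨-, him | him⟩ | ⟨hre | hre, -⟩ := hw
  · rw [hD' (v := z - w) (by simp_all)]
    simp
  · rw [hD' (v := z + w) (by simp_all)]
    simp
  · rw [hD' (v := z - I * w) (by simp_all)]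
    simp
  · rw [hD' (v := z + I * w) (by simp_all)]
    simp

theorem eq_zero_of_ofReal_eq_zero (hc : ContinuousOn D {z | z.im ≤ 0})
    (hd : DifferentiableOn ℂ D {z | z.im < 0}) (hD : ∀ x : ℝ, D x = 0) (hz : z.im < 0) :
    D z = 0 := by
  have hbdd := (Metric.isBounded_Ioo z.im (-z.im)).reProdIm (Metric.isBounded_Ioo z.im (-z.im))
  have hmax := Complex.norm_le_of_forall_mem_frontier_norm_le hbdd
    (diffContOnCl_rotationProduct hc hd hz) (C := 0) (z := 0)
    (fun w hw => by rw [rotationProduct_eq_zero_of_mem_frontier hD hz hw, norm_zero])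
    (subset_closure (by simp [mem_reProdIm, hz]))
  simpa only [rotationProduct, mul_zero, add_zero, sub_zero, norm_le_zero_iff, mul_eq_zero,
    or_self] using hmax

theorem eq_of_ofReal_eq (hc : ContinuousOn D {z | z.im ≤ 0})
    (hd : DifferentiableOn ℂ D {z | z.im < 0}) (hc' : ContinuousOn D' {z | z.im ≤ 0})
    (hd' : DifferentiableOn ℂ D' {z | z.im < 0}) (hD : ∀ x : ℝ, D x = D' x) (hz : z.im < 0) :
    D z = D' z :=
  sub_eq_zero.1 (eq_zero_of_ofReal_eq_zero (D := D - D') (hc.sub hc') (hd.sub hd')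
    (fun x => sub_eq_zero.2 (hD x)) hz)

end LowerHalfPlane

section ContinuumEigenfunctions

theorem RapidAtTop.eq_mul_mellin_of_ofReal_eq {g : ℝ → ℂ} (hg : RapidAtTop g) {G : ℂ → ℂ} {c : ℂ}
    {E' : ℝ} (hE' : 0 < E') (hcont : ContinuousOn G {z | z.im ≤ 0})
    (hdiff : DifferentiableOn ℂ G {z | z.im < 0})
    (hG : ∀ e : ℝ, G e = c * mellin g (1 / 2 + I * e / E')) {z : ℂ} (hz : z.im < 0) :
    G z = c * mellin g (1 / 2 + I * z / E') := by
  have hmellin (z : ℂ) (hz : z.im ≤ 0) :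
      DifferentiableAt ℂ (fun z => c * mellin g (1 / 2 + I * z / E')) z := by
    have hre : 0 < (1 / 2 + I * z / E').re := by
      rw [add_re, div_ofReal_re]
      simp
      linarith [div_nonneg (neg_nonneg.2 hz) hE'.le]
    exact ((hg.differentiableAt_mellin hre).comp z
      (f := fun z : ℂ => 1 / 2 + I * z / E') (by fun_prop)).const_mul c
  exact eq_of_ofReal_eq hcont hdiff
    (fun z hz => (hmellin z hz).continuousAt.continuousWithinAt)
    (fun z hz => (hmellin z (le_of_lt hz)).differentiableWithinAt) hG hz

theorem RapidAtTop.eq_zero_of_hardy {g : ℝ → ℂ} (hg : RapidAtTop g)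
    (hint : ∀ σ ≥ (1 : ℝ), Integrable fun τ : ℝ => ‖mellin g (σ + τ * I)‖ ^ 2) {G : ℂ → ℂ} {c : ℂ}
    (hc : c ≠ 0) {E' : ℝ} (hE' : 0 < E') {C Λ : ℝ} (hcont : ContinuousOn G {z | z.im ≤ 0})
    (hdiff : DifferentiableOn ℂ G {z | z.im < 0})
    (hG : ∀ e : ℝ, G e = c * mellin g (1 / 2 + I * e / E'))
    (hC : ∀ y : ℝ, y < 0 → ∫ u : ℝ, ‖G (u + I * y)‖ ^ 2 ≤ C * Real.exp (-Λ * y))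
    {t : ℝ} (ht : Real.exp (Λ * E' / 2) < t) : g t = 0 := by
  refine hg.eq_zero_of_mellin_bound (C := C * Real.exp (-(Λ * E' / 2)) / (‖c‖ ^ 2 * E'))
    (Real.exp_pos _) hint (fun σ hσ => ?_) ht
  have hy : -(E' * (σ - 1 / 2)) < 0 := neg_neg_of_pos (mul_pos hE' (by linarith))
  have hline (u : ℝ) : ‖G (u + I * (-(E' * (σ - 1 / 2)) : ℝ))‖ ^ 2 =
      ‖c‖ ^ 2 * ‖mellin g (σ + (E'⁻¹ * u : ℝ) * I)‖ ^ 2 := by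
    rw [hg.eq_mul_mellin_of_ofReal_eq hE' hcont hdiff hG (by simpa using hy), norm_mul, mul_pow]
    congr 4
    have hE : (E' : ℂ) ≠ 0 := ofReal_ne_zero.2 hE'.ne'
    push_cast
    field_simp
    ring_nf
    simp
  have hbound := hC _ hy
  simp_rw [hline] at hbound
  rw [integral_const_mul, Measure.integral_comp_mul_left
    (fun τ : ℝ => ‖mellin g (σ + τ * I)‖ ^ 2), inv_inv, abs_of_pos hE', smul_eq_mul,
    ← mul_assoc] at hbound
  rw [div_mul_eq_mul_div, le_div_iff₀' (by positivity), mul_assoc C, ← Real.exp_mul,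
    ← Real.exp_add]
  refine hbound.trans_eq ?_
  ring_nf

theorem conj_nuOf (E' e : ℝ) : starRingEnd ℂ (nuOf E' e) = 1 / 2 + I * e / E' - 1 := by
  simp [nuOf, map_ofNat]
  ring

theorem conj_integral_cexp_mul_cpow_nuOf (E' s e q : ℝ) :
    starRingEnd ℂ (∫ u in Set.Ioi (0 : ℝ), cexp (s * cexp (-I * Real.pi / 4) *
        Real.sqrt (2 * E') * q * u - (u : ℂ) ^ 2 / 2) * (u : ℂ) ^ nuOf E' e) =
      mellin (gaussExp (cexp (Real.pi / 4 * I) * (s * Real.sqrt (2 * E') * q)) 1)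
        (1 / 2 + I * e / E') := by
  have hphase : starRingEnd ℂ (cexp (-I * Real.pi / 4)) = cexp (Real.pi / 4 * I) := by
    rw [← Complex.exp_conj]
    simp [map_ofNat]
    ring_nf
  rw [← integral_conj]
  refine setIntegral_congr_fun measurableSet_Ioi fun u (hu : 0 < u) => ?_
  have hcpow : starRingEnd ℂ ((u : ℂ) ^ nuOf E' e) = (u : ℂ) ^ (1 / 2 + I * e / E' - 1) := by
    have harg : (u : ℂ).arg ≠ Real.pi := by
      rw [arg_ofReal_of_nonneg hu.le]
      exact Real.pi_pos.ne
    rw [← conj_nuOf, cpow_conj _ _ harg, conj_ofReal]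
  rw [map_mul, hcpow, ← Complex.exp_conj, smul_eq_mul, mul_comm, gaussExp]
  simp only [map_sub, map_mul, map_div₀, map_pow, conj_ofReal, map_ofNat, hphase]
  ring_nf

/-- The normalization of `chiE`, times the phase `e^{iπ/8}` that remains on the line
`Re S = 1 / 2` once the contour of its Mellin integral has been rotated by `π / 4`. -/
noncomputable def chiConst (E' : ℝ) : ℂ :=
  (((E' / (2 * Real.pi ^ 2)) ^ ((1 : ℝ) / 4) : ℝ) : ℂ) *
    ((Real.sqrt (2 * Real.pi * E'))⁻¹ : ℝ) * cexp (Real.pi / 8 * I)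

theorem chiConst_ne_zero {E' : ℝ} (hE' : 0 < E') : chiConst E' ≠ 0 := by
  refine mul_ne_zero (mul_ne_zero ?_ ?_) (Complex.exp_ne_zero _) <;>
    exact ofReal_ne_zero.2 (by positivity)

theorem conj_chiE (E' s e q : ℝ) :
    starRingEnd ℂ (chiE E' s e q) =
      chiConst E' * cexp (-((1 / 2 + I * e / E') * (Real.pi / 4 * I))) * (gaussExp 0 (I * E') q *
        mellin (gaussExp (cexp (Real.pi / 4 * I) * (s * Real.sqrt (2 * E') * q)) 1)
          (1 / 2 + I * e / E')) := by
  have hphase : starRingEnd ℂ (cexp (I * Real.pi * (2 * nuOf E' e + 1) / 8)) =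
      cexp (Real.pi / 8 * I) * cexp (-((1 / 2 + I * e / E') * (Real.pi / 4 * I))) := by
    rw [← Complex.exp_conj, ← Complex.exp_add]
    simp [conj_nuOf, map_ofNat]
    ring_nf
  have hchirp : starRingEnd ℂ (cexp (I * E' * (q : ℂ) ^ 2 / 2)) = gaussExp 0 (I * E') q := by
    rw [← Complex.exp_conj, gaussExp]
    simp [map_ofNat]
    ring_nf
  rw [chiE, map_mul, map_mul, map_mul, map_mul, conj_ofReal, conj_ofReal, hphase, hchirp,
    conj_integral_cexp_mul_cpow_nuOf, chiConst]
  ring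

theorem integral_conj_chiE_mul {E' : ℝ} (hE' : 0 < E') {φ f : 𝓢(ℝ, ℂ)}
    (hf : ∀ q, f q = gaussExp 0 (I * E') q * φ q) {s : ℝ} (hs : s ≠ 0) (e : ℝ) :
    ∫ q : ℝ, starRingEnd ℂ (chiE E' s e q) * φ q =
      chiConst E' * mellin (fun t => gaussExp 0 I t *
        𝓕⁻ f (s * Real.sqrt (2 * E') / (2 * Real.pi) * t)) (1 / 2 + I * e / E') := by
  have hre : (1 / 2 + I * e / E' : ℂ).re = 1 / 2 := by
    rw [add_re, div_ofReal_re]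
    simp
  have hκ : s * Real.sqrt (2 * E') / (2 * Real.pi) ≠ 0 := by positivity
  have hrot := integral_mul_mellin_gaussExp_rotated f hκ (S := 1 / 2 + I * e / E')
    (by rw [hre]; norm_num) (by rw [hre]; norm_num)
  have hβ (q : ℝ) : 2 * Real.pi * (s * Real.sqrt (2 * E') / (2 * Real.pi) : ℝ) * q =
      (s * Real.sqrt (2 * E') * q : ℂ) := by
    have hπ : (Real.pi : ℂ) ≠ 0 := ofReal_ne_zero.2 Real.pi_ne_zero
    push_cast
    field_simp
  simp_rw [hβ, hf] at hrot
  have hconj (q : ℝ) : starRingEnd ℂ (chiE E' s e q) * φ q =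
      chiConst E' * cexp (-((1 / 2 + I * e / E') * (Real.pi / 4 * I))) *
        (gaussExp 0 (I * E') q * φ q *
        mellin (gaussExp (cexp (Real.pi / 4 * I) * (s * Real.sqrt (2 * E') * q)) 1)
          (1 / 2 + I * e / E')) := by
    rw [conj_chiE]
    ring
  simp_rw [hconj]
  rw [integral_const_mul, hrot, ← mul_assoc, mul_assoc (chiConst E'), ← Complex.exp_add,
    neg_add_cancel, Complex.exp_zero, mul_one]

theorem exists_fourierInv_eq_zero_of_hardy {E' : ℝ} (hE' : 0 < E') {φ f : 𝓢(ℝ, ℂ)}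
    (hf : ∀ q, f q = gaussExp 0 (I * E') q * φ q) {s : ℝ} (hs : s ≠ 0) {G : ℂ → ℂ} {C Λ : ℝ}
    (hG : ∀ e : ℝ, G e = ∫ q : ℝ, starRingEnd ℂ (chiE E' s e q) * φ q)
    (hcont : ContinuousOn G {z | z.im ≤ 0}) (hdiff : DifferentiableOn ℂ G {z | z.im < 0})
    (hC : ∀ y : ℝ, y < 0 → ∫ u : ℝ, ‖G (u + I * y)‖ ^ 2 ≤ C * Real.exp (-Λ * y)) :
    ∃ R, ∀ t > R, 𝓕⁻ f (s * Real.sqrt (2 * E') / (2 * Real.pi) * t) = 0 := by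
  have hκ : s * Real.sqrt (2 * E') / (2 * Real.pi) ≠ 0 := by positivity
  obtain ⟨h, hh⟩ := exists_schwartzMap_comp_mul_left (𝓕⁻ f) hκ
  obtain ⟨g, hg⟩ := exists_schwartzMap_gaussExp_mul h (a := I) I_re
  have hrapid := RapidAtTop.of_schwartzMap g
  have hint (σ : ℝ) (hσ : 1 ≤ σ) : Integrable fun τ : ℝ => ‖mellin g (σ + τ * I)‖ ^ 2 :=
    hrapid.integrable_norm_sq_mellin_vertical
      (RapidAtTop.of_schwartzMap (SchwartzMap.derivCLM ℂ ℂ g)) (fun t => g.hasDerivAt t) hσ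
  have hGg (e : ℝ) : G e = chiConst E' * mellin g (1 / 2 + I * e / E') := by
    rw [hG, integral_conj_chiE_mul hE' hf hs]
    simp_rw [← hh, ← hg]
  refine ⟨Real.exp (Λ * E' / 2), fun t ht => ?_⟩
  have hgt := hrapid.eq_zero_of_hardy hint (chiConst_ne_zero hE') hE' hcont hdiff hGg hC ht
  rw [hg, hh] at hgt
  exact (mul_eq_zero.1 hgt).resolve_left (Complex.exp_ne_zero _)

end ContinuumEigenfunctions

section ResonanceEigenfunctions

theorem exists_forall_abs_gt_fourierInv_eq_zero_of_hardy {E' : ℝ} (hE' : 0 < E') {φ f : 𝓢(ℝ, ℂ)}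
    (hf : ∀ q, f q = gaussExp 0 (I * E') q * φ q)
    (hG : ∀ s : ℝ, s = 1 ∨ s = -1 → ∃ G : ℂ → ℂ,
      (∀ e : ℝ, G e = ∫ q : ℝ, starRingEnd ℂ (chiE E' s e q) * φ q) ∧
      ContinuousOn G {z | z.im ≤ 0} ∧ DifferentiableOn ℂ G {z | z.im < 0} ∧
      ∃ C Λ : ℝ, ∀ y : ℝ, y < 0 → ∫ u : ℝ, ‖G (u + I * y)‖ ^ 2 ≤ C * Real.exp (-Λ * y)) :
    ∃ R, ∀ ξ : ℝ, R < |ξ| → 𝓕⁻ f ξ = 0 := by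
  have hray (s : ℝ) (hs : s = 1 ∨ s = -1) :
      ∃ R, ∀ t > R, 𝓕⁻ f (s * Real.sqrt (2 * E') / (2 * Real.pi) * t) = 0 := by
    obtain ⟨G, hGe, hcont, hdiff, C, Λ, hC⟩ := hG s hs
    have hs₀ : s ≠ 0 := by rcases hs with rfl | rfl <;> norm_num
    exact exists_fourierInv_eq_zero_of_hardy hE' hf hs₀ hGe hcont hdiff hC
  obtain ⟨R₁, hR₁⟩ := hray 1 (.inl rfl)
  obtain ⟨R₂, hR₂⟩ := hray (-1) (.inr rfl)
  set κ := Real.sqrt (2 * E') / (2 * Real.pi) with hκ_def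
  have hκ : 0 < κ := by positivity
  refine ⟨κ * max R₁ R₂, fun ξ hξ => ?_⟩
  rw [← lt_div_iff₀' hκ, max_lt_iff] at hξ
  rcases abs_cases ξ with ⟨habs, -⟩ | ⟨habs, -⟩ <;> rw [habs] at hξ
  · convert hR₁ _ hξ.1 using 2
    rw [one_mul, ← hκ_def, mul_div_cancel₀ _ hκ.ne']
  · convert hR₂ _ hξ.2 using 2
    rw [neg_one_mul, neg_div, ← hκ_def, neg_mul, mul_div_cancel₀ _ hκ.ne', neg_neg]

/-- The part `(E'/π)^{1/4} e^{-iπ/8}` of the normalization of `f_n^-` that does not depend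
on `n`. -/
noncomputable def fresConst (E' : ℝ) : ℂ :=
  (((E' / Real.pi) ^ ((1 : ℝ) / 4) : ℝ) : ℂ) * cexp (-(Real.pi / 8 * I))

/-- The complex scaling factor `e^{-iπ/4} √E'` of the variable of `f_n^-`, a square root of
`-iE'`. -/
noncomputable def fresScale (E' : ℝ) : ℂ := cexp (-(Real.pi / 4 * I)) * Real.sqrt E'

theorem fresScale_sq {E' : ℝ} (hE' : 0 ≤ E') : fresScale E' ^ 2 = -(I * E') := by
  have hphase : cexp (-(Real.pi / 4 * I)) ^ 2 = -I := by
    rw [← Complex.exp_nat_mul, ← exp_neg_pi_div_two_mul_I]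
    congr 1
    push_cast
    ring
  rw [fresScale, mul_pow, hphase, ← ofReal_pow, Real.sq_sqrt hE', neg_mul]

theorem pi_div_neg_I_mul_cpow_half {E' : ℝ} (hE' : 0 < E') :
    (Real.pi / -(I * E') : ℂ) ^ (1 / 2 : ℂ) =
      Real.sqrt (Real.pi / E') * cexp (Real.pi / 4 * I) := by
  have hE : (E' : ℂ) ≠ 0 := ofReal_ne_zero.2 hE'.ne'
  have hpos : 0 < Real.pi / E' := by positivity
  have hbase : (Real.pi / -(I * E') : ℂ) = (Real.pi / E' : ℝ) * I := by
    push_cast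
    field_simp
    simp
  rw [hbase, cpow_def_of_ne_zero (by simp [Real.pi_ne_zero, hE]),
    log_ofReal_mul hpos I_ne_zero, log_I, add_mul, Complex.exp_add, Real.sqrt_eq_rpow,
    ofReal_cpow hpos.le, cpow_def_of_ne_zero (ofReal_ne_zero.2 hpos.ne'), ofReal_log hpos.le]
  congr 2
  · push_cast
    ring
  · ring

theorem fresConst_sq_mul {E' : ℝ} (hE' : 0 < E') :
    fresConst E' ^ 2 * (Real.pi / fresScale E' ^ 2) ^ (1 / 2 : ℂ) = 1 := by
  have hphase : cexp (-(Real.pi / 8 * I)) ^ 2 * cexp (Real.pi / 4 * I) = 1 := by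
    rw [← Complex.exp_nat_mul, ← Complex.exp_add]
    convert Complex.exp_zero using 2
    push_cast
    ring
  have hmodulus : ((E' / Real.pi) ^ ((1 : ℝ) / 4)) ^ 2 * Real.sqrt (Real.pi / E') = 1 := by
    have hpos : 0 < E' / Real.pi := by positivity
    rw [← Real.rpow_mul_natCast hpos.le, ← inv_div E' Real.pi, Real.sqrt_inv, Real.sqrt_eq_rpow]
    norm_num
    exact mul_inv_cancel₀ (by positivity)
  rw [fresScale_sq hE'.le, pi_div_neg_I_mul_cpow_half hE', fresConst, mul_pow, mul_mul_mul_comm,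
    hphase, ← ofReal_pow, ← ofReal_mul, hmodulus, ofReal_one, one_mul]

theorem fres_neg_one (E' : ℝ) (n : ℕ) (q : ℝ) :
    fres E' (-1) n q = fresConst E' * (Real.sqrt (2 ^ n * n.factorial) : ℂ)⁻¹ *
      (gaussExp 0 (-(I * E')) q * hermitePoly n (fresScale E' * q)) := by
  simp only [fres, fresConst, fresScale, gaussExp]
  push_cast
  ring_nf

theorem conj_fres (E' s : ℝ) (n : ℕ) (q : ℝ) :
    starRingEnd ℂ (fres E' s n q) = fres E' (-s) n q := by
  simp [fres, conj_hermitePoly, ← Complex.exp_conj, map_ofNat]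

theorem integral_conj_fres_mul_mul_fres {E' : ℝ} (hE' : 0 ≤ E') {φ f : 𝓢(ℝ, ℂ)}
    (hf : ∀ q, f q = gaussExp 0 (I * E') q * φ q) (n : ℕ) (q : ℝ) :
    (∫ x : ℝ, starRingEnd ℂ (fres E' 1 n x) * φ x) * fres E' (-1) n q =
      fresConst E' ^ 2 * gaussExp 0 (-(I * E')) q *
        (hermitePoly n (fresScale E' * q) / (2 ^ n * n.factorial) *
          ∫ x : ℝ, cexp (-fresScale E' ^ 2 * (x : ℂ) ^ 2) *
            hermitePoly n (fresScale E' * x) * f x) := by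
  have hpair (x : ℝ) : starRingEnd ℂ (fres E' 1 n x) * φ x =
      fresConst E' * (Real.sqrt (2 ^ n * n.factorial) : ℂ)⁻¹ *
        (cexp (-fresScale E' ^ 2 * (x : ℂ) ^ 2) * hermitePoly n (fresScale E' * x) * f x) := by
    have hchirp : gaussExp 0 (-(I * E')) x =
        cexp (-fresScale E' ^ 2 * (x : ℂ) ^ 2) * gaussExp 0 (I * E') x := by
      rw [fresScale_sq hE', gaussExp, gaussExp, ← Complex.exp_add]
      ring_nf
    rw [conj_fres, fres_neg_one, hchirp, hf]
    ring
  have hnorm : (Real.sqrt (2 ^ n * n.factorial) : ℂ)⁻¹ ^ 2 = (2 ^ n * n.factorial : ℂ)⁻¹ := by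
    rw [inv_pow, ← ofReal_pow, Real.sq_sqrt (by positivity)]
    push_cast
    rfl
  simp_rw [hpair]
  rw [integral_const_mul, fres_neg_one, div_eq_mul_inv, ← hnorm]
  ring

theorem hasSum_fres_of_fourierInv_support {E' : ℝ} (hE' : 0 < E') {φ f : 𝓢(ℝ, ℂ)}
    (hf : ∀ q, f q = gaussExp 0 (I * E') q * φ q) {R : ℝ}
    (hR : ∀ ξ : ℝ, R < |ξ| → 𝓕⁻ f ξ = 0) (q : ℝ) :
    HasSum (fun n => (∫ x : ℝ, starRingEnd ℂ (fres E' 1 n x) * φ x) * fres E' (-1) n q)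
      (φ q) := by
  have hre : 0 ≤ (fresScale E' ^ 2).re := by simp [fresScale_sq hE'.le]
  have hne : fresScale E' ≠ 0 :=
    mul_ne_zero (Complex.exp_ne_zero _) (ofReal_ne_zero.2 (Real.sqrt_pos.2 hE').ne')
  have hcancel : gaussExp 0 (-(I * E')) q * gaussExp 0 (I * E') q = 1 := by
    simp [gaussExp, ← Complex.exp_add, neg_div]
  have hsum := (hasSum_hermitePoly_of_fourierInv_support hre hne hR q).mul_left
    (fresConst E' ^ 2 * gaussExp 0 (-(I * E')) q)
  have hlimit : fresConst E' ^ 2 * gaussExp 0 (-(I * E')) q *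
      ((Real.pi / fresScale E' ^ 2) ^ (1 / 2 : ℂ) * f q) = φ q := by
    rw [mul_mul_mul_comm, fresConst_sq_mul hE', one_mul, hf, ← mul_assoc, hcancel, one_mul]
  rw [hlimit] at hsum
  exact hsum.congr_fun fun n => integral_conj_fres_mul_mul_fres hE'.le hf n q

theorem resonance_expansion_of_hardy_general {E' : ℝ} (hE' : 0 < E') (φ : 𝓢(ℝ, ℂ))
    (hG : ∀ s : ℝ, s = 1 ∨ s = -1 → ∃ G : ℂ → ℂ,
      (∀ e : ℝ, G e = ∫ q : ℝ, starRingEnd ℂ (chiE E' s e q) * φ q) ∧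
      ContinuousOn G {z | z.im ≤ 0} ∧ DifferentiableOn ℂ G {z | z.im < 0} ∧
      ∃ C Λ : ℝ, ∀ y : ℝ, y < 0 → ∫ u : ℝ, ‖G (u + I * y)‖ ^ 2 ≤ C * Real.exp (-Λ * y)) (q : ℝ) :
    HasSum (fun n => (∫ x : ℝ, starRingEnd ℂ (fres E' 1 n x) * φ x) * fres E' (-1) n q)
      (φ q) := by
  obtain ⟨f, hf⟩ := exists_schwartzMap_gaussExp_mul φ (a := I * E') (by simp)
  obtain ⟨R, hR⟩ := exists_forall_abs_gt_fourierInv_eq_zero_of_hardy hE' hf hG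
  exact hasSum_fres_of_fourierInv_support hE' hf hR q

end ResonanceEigenfunctions

/-- if for each degeneracy sign the continuum coefficient
function `G_s(𝓔) = ⟨χ^𝓔_s, φ⟩` is Schwartz on `ℝ` and extends to a Hardy-class
function on the lower half-plane, then `φ` admits the pointwise-convergent
discrete resonance expansion `φ = Σ_n ⟨f_n^+, φ⟩ f_n^−`. -/
theorem resonance_expansion_of_hardy (E' : ℝ) (hE' : 0 < E')
    (φ : SchwartzMap ℝ ℂ)
    (hG : ∀ sgn : ℝ, sgn = 1 ∨ sgn = -1 → ∃ G : ℂ → ℂ,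
      (∀ e : ℝ, G (e : ℂ) = ∫ q : ℝ, (starRingEnd ℂ) (chiE E' sgn e q) * φ q) ∧
      (∃ ψ : SchwartzMap ℝ ℂ, ∀ u : ℝ, ψ u = G (u : ℂ)) ∧
      ContinuousOn G {z : ℂ | z.im ≤ 0} ∧
      DifferentiableOn ℂ G {z : ℂ | z.im < 0} ∧
      (∃ C : ℝ, ∀ y : ℝ, y < 0 →
        (∫ u : ℝ, ‖G ((u : ℂ) + Complex.I * (y : ℂ))‖ ^ 2) ≤ C)) :
    ∀ q : ℝ,
      Filter.Tendsto
        (fun N : ℕ => ∑ n ∈ Finset.range N,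
          (∫ q' : ℝ, (starRingEnd ℂ) (fres E' 1 n q') * φ q') * fres E' (-1) n q)
        Filter.atTop (nhds (φ q)) := by
  intro q
  refine (resonance_expansion_of_hardy_general hE' φ (fun s hs => ?_) q).tendsto_sum_nat
  obtain ⟨G, hGe, -, hcont, hdiff, C, hC⟩ := hG s hs
  exact ⟨G, hGe, hcont, hdiff, C, 0, by simpa using hC⟩
end

section
/- Let α ≥ ½, E′ > 0, and let φ be a Schwartz function on ℝ with Hermite coefficients a_n := ∫_ℝ ψ_n(q) φ(q) dq. Then φ belongs to the Gel'fand–Shilov space S^α_α(ℝ) if and only if the sequence (a_n) has ultrafast falloff, i.e. there exists κ > 0 such that Σ_{n=0}^∞ |a_n|² e^{2Ω(κ√n)} < ∞, where Ω(y) := sup_{m∈ℕ₀} log(y^m m^{−αm}) for y > 0 (with the convention 0⁰ := 1). -/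
open MeasureTheory Filter Complex

/-- Physicists' Hermite polynomials (real version). -/
noncomputable def hermitePolyR : ℕ → ℝ → ℝ
  | 0, _ => 1
  | 1, y => 2 * y
  | (n + 2), y => 2 * y * hermitePolyR (n + 1) y - 2 * (n + 1) * hermitePolyR n y

/-- The `L²`-normalized Hermite (harmonic-oscillator) functions
`ψ_n(q) = (E′/π)^{1/4} (2ⁿ n!)^{−1/2} e^{−E′q²/2} H_n(√(E′) q)`. -/
noncomputable def hermiteFn (E' : ℝ) (n : ℕ) (q : ℝ) : ℝ :=
  (E' / Real.pi) ^ ((1 : ℝ) / 4) * (Real.sqrt (2 ^ n * n.factorial))⁻¹ *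
    Real.exp (-(E' * q ^ 2) / 2) * hermitePolyR n (Real.sqrt E' * q)

/-- Membership in the Gel'fand–Shilov space `S^α_α(ℝ)`. -/
def GelfandShilov (α : ℝ) (φ : ℝ → ℂ) : Prop :=
  ContDiff ℝ (⊤ : ℕ∞) φ ∧ ∃ C > (0 : ℝ), ∃ M > (0 : ℝ), ∀ n m : ℕ, ∀ x : ℝ,
    ‖((x : ℂ)) ^ m * iteratedDeriv n φ x‖
      ≤ C * M ^ (n + m) * (n : ℝ) ^ (α * (n : ℝ)) * (m : ℝ) ^ (α * (m : ℝ))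

/-- `Ω(y) := sup_{m∈ℕ₀} log(y^m m^{−αm})`. -/
noncomputable def Omega (α y : ℝ) : ℝ :=
  ⨆ m : ℕ, Real.log (y ^ m * (m : ℝ) ^ (-(α * (m : ℝ))))

/-!
Ultrafast falloff is the same as the estimates `√n ^ k ‖a n‖ ≤ C Kᵏ k ^ (α k)` for all `k`, because
`exp Ω(y)` is the supremum of `yᵐ / m ^ (α m)`. Both implications move such estimates between `φ`
and its Hermite coefficients with the ladder operators `E′q ± d/dq`, which act on the Hermite
functions as weighted shifts with weights `√(2E′n)`.

From functions to coefficients, the creation operator `A` satisfies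
`‖a (n + k) (Aᵏ φ)‖ ≥ (√(2E′) √n) ^ k ‖a n φ‖`, while the Gel'fand–Shilov estimates bound
`Aᵏ φ`, hence its coefficients, by a constant times `Kᵏ k ^ (α k)`. The commutator terms from
`[d/dq, q] = 1` are harmless because `k ≤ (k ^ α) ^ 2`; this is where `α ≥ ½` enters.

From coefficients to functions, `q` and `d/dq` are tridiagonal in the Hermite basis, so each
application costs one factor `√(n + k)` in the decay of the coefficients. Parseval's identity and
the bound of `‖f‖²` by `∫ ‖f‖² + ∫ ‖f'‖²` turn the remaining decay into a supremum bound.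
-/

open scoped SchwartzMap ContDiff FourierTransform

section HermiteRecurrences

lemma hermitePolyR_succ (n : ℕ) (y : ℝ) :
    hermitePolyR (n + 1) y = 2 * y * hermitePolyR n y - 2 * n * hermitePolyR (n - 1) y := by
  rcases n with _ | n
  · simp [hermitePolyR]
  · simp [hermitePolyR]

lemma hasDerivAt_hermitePolyR (n : ℕ) (y : ℝ) :
    HasDerivAt (hermitePolyR n) (2 * n * hermitePolyR (n - 1) y) y := by
  induction n using Nat.twoStepInduction with
  | zero =>
    simpa using (hasDerivAt_const y (1 : ℝ)).congr_of_eventuallyEq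
      (Eventually.of_forall fun _ => by simp [hermitePolyR])
  | one => simpa [hermitePolyR] using (hasDerivAt_id y).const_mul (2 : ℝ)
  | more n ih₀ ih₁ =>
    have recurrence :=
      (((hasDerivAt_id y).const_mul 2).mul ih₁).sub (ih₀.const_mul (2 * (n + 1 : ℝ)))
    refine recurrence.congr_deriv ?_
    simp only [id, Nat.add_sub_cancel, Nat.add_succ_sub_one, hermitePolyR_succ n y]
    push_cast
    ring

/-- The ladder coefficient `√(2En)`: the creation and annihilation operators `Eq ∓ d/dq` send the
`n`-th Hermite function to `√(2E(n+1))` and `√(2En)` times its upper and lower neighbour. -/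
noncomputable def ladderCoeff (E : ℝ) (n : ℕ) : ℝ := √(2 * E * n)

variable {E : ℝ}

@[simp]
lemma ladderCoeff_zero (E : ℝ) : ladderCoeff E 0 = 0 := by simp [ladderCoeff]

lemma ladderCoeff_nonneg (E : ℝ) (n : ℕ) : 0 ≤ ladderCoeff E n := Real.sqrt_nonneg _

lemma ladderCoeff_eq_mul_sqrt (hE : 0 ≤ E) (n : ℕ) : ladderCoeff E n = √(2 * E) * √n :=
  Real.sqrt_mul (by positivity) _

lemma ladderCoeff_succ_pos (hE : 0 < E) (n : ℕ) : 0 < ladderCoeff E (n + 1) :=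
  Real.sqrt_pos.2 (by positivity)

lemma inv_sqrt_two_pow_mul_factorial_succ (hE : 0 ≤ E) (n : ℕ) :
    ladderCoeff E (n + 1) * (√(2 ^ (n + 1) * (n + 1).factorial))⁻¹ =
      √E * (√(2 ^ n * n.factorial))⁻¹ := by
  have factorial_split : (2 : ℝ) ^ (n + 1) * (n + 1).factorial =
      (2 ^ n * n.factorial) * (2 * (n + 1 : ℕ)) := by
    rw [Nat.factorial_succ]; push_cast; ring
  have coeff_split : ladderCoeff E (n + 1) = √E * √(2 * (n + 1 : ℕ)) := by
    rw [ladderCoeff, ← Real.sqrt_mul hE]; ring_nf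
  have hn : √(2 * ((n + 1 : ℕ) : ℝ)) ≠ 0 := by positivity
  rw [factorial_split, coeff_split,
    Real.sqrt_mul (by positivity : (0 : ℝ) ≤ 2 ^ n * n.factorial), mul_inv]
  linear_combination √E * (√(2 ^ n * n.factorial))⁻¹ * mul_inv_cancel₀ hn

lemma ladderCoeff_mul_hermiteFn_pred (hE : 0 < E) (n : ℕ) (q : ℝ) :
    ladderCoeff E n * hermiteFn E (n - 1) q =
      (E / Real.pi) ^ ((1 : ℝ) / 4) * (√(2 ^ n * n.factorial))⁻¹ * Real.exp (-(E * q ^ 2) / 2) *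
        (√E * (2 * n * hermitePolyR (n - 1) (√E * q))) := by
  rcases n with _ | n
  · simp
  · have hsq : ladderCoeff E (n + 1) * ladderCoeff E (n + 1) = √E * √E * (2 * (n + 1 : ℕ)) := by
      rw [ladderCoeff, Real.mul_self_sqrt (by positivity), Real.mul_self_sqrt hE.le]; ring
    rw [Nat.add_sub_cancel, hermiteFn]
    refine mul_left_cancel₀ (Real.sqrt_pos.2 hE).ne' ?_
    linear_combination (E / Real.pi) ^ ((1 : ℝ) / 4) * Real.exp (-(E * q ^ 2) / 2) *
      hermitePolyR n (√E * q) * (-ladderCoeff E (n + 1) *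
        inv_sqrt_two_pow_mul_factorial_succ hE.le n +
          (√(2 ^ (n + 1) * (n + 1).factorial))⁻¹ * hsq)

lemma hasDerivAt_hermiteFn (hE : 0 < E) (n : ℕ) (q : ℝ) :
    HasDerivAt (hermiteFn E n)
      (ladderCoeff E n * hermiteFn E (n - 1) q - E * q * hermiteFn E n q) q := by
  have gaussian : HasDerivAt (fun q : ℝ => Real.exp (-(E * q ^ 2) / 2))
      (Real.exp (-(E * q ^ 2) / 2) * (-(E * (2 * q)) / 2)) q := by
    simpa using (((hasDerivAt_pow 2 q).const_mul E).neg.div_const 2).exp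
  have poly : HasDerivAt (fun q : ℝ => hermitePolyR n (√E * q))
      (2 * n * hermitePolyR (n - 1) (√E * q) * √E) q := by
    simpa [Function.comp_def] using
      (hasDerivAt_hermitePolyR n (√E * q)).comp q ((hasDerivAt_id q).const_mul √E)
  refine ((gaussian.const_mul _).mul poly).congr_deriv ?_
  rw [ladderCoeff_mul_hermiteFn_pred hE, hermiteFn]
  ring

lemma ladderCoeff_mul_hermiteFn_succ (hE : 0 < E) (n : ℕ) (q : ℝ) :
    ladderCoeff E (n + 1) * hermiteFn E (n + 1) q =
      2 * E * q * hermiteFn E n q - ladderCoeff E n * hermiteFn E (n - 1) q := by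
  have hsq : √E * √E = E := Real.mul_self_sqrt hE.le
  have norm := inv_sqrt_two_pow_mul_factorial_succ hE.le n
  rw [ladderCoeff_mul_hermiteFn_pred hE, hermiteFn, hermiteFn, hermitePolyR_succ]
  linear_combination (E / Real.pi) ^ ((1 : ℝ) / 4) * Real.exp (-(E * q ^ 2) / 2) *
    ((2 * (√E * q) * hermitePolyR n (√E * q) - 2 * n * hermitePolyR (n - 1) (√E * q)) * norm +
      (√(2 ^ n * n.factorial))⁻¹ * 2 * q * hermitePolyR n (√E * q) * hsq)

lemma hermiteFn_zero (E q : ℝ) :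
    hermiteFn E 0 q = (E / Real.pi) ^ ((1 : ℝ) / 4) * Real.exp (-(E * q ^ 2) / 2) := by
  simp [hermiteFn, hermitePolyR]

end HermiteRecurrences

section Schwartz

lemma exists_abs_pow_mul_eval_mul_exp_neg_sq_le (p : Polynomial ℝ) (k : ℕ) :
    ∃ C, ∀ x : ℝ, |x| ^ k * |p.eval x * Real.exp (-(x ^ 2 / 2))| ≤ C := by
  induction p using Polynomial.induction_on' generalizing k with
  | add p q hp hq =>
    obtain ⟨C, hC⟩ := hp k
    obtain ⟨C', hC'⟩ := hq k
    refine ⟨C + C', fun x => le_trans ?_ (add_le_add (hC x) (hC' x))⟩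
    rw [← mul_add, Polynomial.eval_add, add_mul]
    gcongr
    exact abs_add_le _ _
  | monomial n a =>
    have decay : Tendsto (fun x : ℝ => |x| ^ (k + n) * Real.exp (-(x ^ 2 / 2)))
        (cocompact ℝ) (nhds 0) := by
      refine (tendsto_rpow_abs_mul_exp_neg_mul_sq_cocompact one_half_pos (k + n : ℕ)).congr
        fun x => ?_
      rw [Real.rpow_natCast]
      ring_nf
    let g : ZeroAtInftyContinuousMap ℝ ℝ := ⟨⟨_, by fun_prop⟩, decay⟩
    refine ⟨|a| * ‖g.toBCF‖, fun x => ?_⟩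
    calc |x| ^ k * |(Polynomial.monomial n a).eval x * Real.exp (-(x ^ 2 / 2))|
        = |a| * g x := by
          rw [Polynomial.eval_monomial, abs_mul, abs_mul, abs_pow, Real.abs_exp]
          simp only [g, ZeroAtInftyContinuousMap.coe_mk]
          ring
      _ ≤ |a| * ‖g.toBCF‖ := by
          gcongr
          exact (le_abs_self _).trans (g.toBCF.norm_coe_le_norm x)

/-- The standard Gaussian `exp (-x² / 2)` as a Schwartz function. -/
noncomputable def standardGaussianSchwartz : 𝓢(ℝ, ℝ) where
  toFun x := Real.exp (-(x ^ 2 / 2))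
  smooth' := by fun_prop
  decay' k n := by
    obtain ⟨C, hC⟩ := exists_abs_pow_mul_eval_mul_exp_neg_sq_le
      ((-1) ^ n * (Polynomial.hermite n).map (Int.castRingHom ℝ)) k
    refine ⟨C, fun x => ?_⟩
    rw [norm_iteratedFDeriv_eq_norm_iteratedDeriv, iteratedDeriv_eq_iterate,
      Polynomial.deriv_gaussian_eq_hermite_mul_gaussian]
    simpa [Polynomial.aeval_def, Polynomial.eval_map] using hC x

variable {E : ℝ}

/-- The ground state `hermiteFn E 0`, a dilated Gaussian, as a complex Schwartz function. -/
noncomputable def groundStateSchwartz (hE : 0 < E) : 𝓢(ℝ, ℂ) :=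
  ((E / Real.pi) ^ ((1 : ℝ) / 4) : ℝ) •
    SchwartzMap.compCLMOfContinuousLinearEquiv ℝ
      (ContinuousLinearEquiv.smulLeft (Units.mk0 √E (Real.sqrt_pos.2 hE).ne'))
      (standardGaussianSchwartz.postcompCLM ofRealCLM)

lemma groundStateSchwartz_apply (hE : 0 < E) (q : ℝ) :
    groundStateSchwartz hE q = hermiteFn E 0 q := by
  have hsq : (√E * q) ^ 2 / 2 = E * q ^ 2 / 2 := by rw [mul_pow, Real.sq_sqrt hE.le]
  change ((E / Real.pi) ^ ((1 : ℝ) / 4) : ℝ) • ((Real.exp (-((√E * q) ^ 2 / 2)) : ℝ) : ℂ) = _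
  rw [hsq, hermiteFn_zero, neg_div, ofReal_mul, real_smul]

/-- The position operator `f ↦ (x ↦ x f(x))` on Schwartz functions. -/
noncomputable def positionCLM : 𝓢(ℝ, ℂ) →L[ℂ] 𝓢(ℝ, ℂ) :=
  SchwartzMap.smulLeftCLM ℂ (fun x : ℝ => (x : ℂ))

@[simp]
lemma positionCLM_apply (f : 𝓢(ℝ, ℂ)) (x : ℝ) : positionCLM f x = x * f x :=
  SchwartzMap.smulLeftCLM_apply_apply Function.Complex.hasTemperateGrowth_ofReal f x

lemma pow_positionCLM_apply (k : ℕ) (f : 𝓢(ℝ, ℂ)) (x : ℝ) :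
    (positionCLM ^ k) f x = x ^ k * f x := by
  induction k with
  | zero => simp
  | succ k ih => rw [pow_succ', mul_apply_eq_comp, positionCLM_apply, ih]; ring

/-- The creation operator `Eq - d/dq` on Schwartz functions. -/
noncomputable def creationCLM (E : ℝ) : 𝓢(ℝ, ℂ) →L[ℂ] 𝓢(ℝ, ℂ) :=
  (E : ℂ) • positionCLM - SchwartzMap.derivCLM ℂ ℂ

/-- The annihilation operator `Eq + d/dq` on Schwartz functions. -/
noncomputable def annihilationCLM (E : ℝ) : 𝓢(ℝ, ℂ) →L[ℂ] 𝓢(ℝ, ℂ) :=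
  (E : ℂ) • positionCLM + SchwartzMap.derivCLM ℂ ℂ

lemma creationCLM_apply (E : ℝ) (f : 𝓢(ℝ, ℂ)) (x : ℝ) :
    creationCLM E f x = E * (x * f x) - deriv f x := by
  simp [creationCLM, SchwartzMap.derivCLM_apply]

lemma annihilationCLM_apply (E : ℝ) (f : 𝓢(ℝ, ℂ)) (x : ℝ) :
    annihilationCLM E f x = E * (x * f x) + deriv f x := by
  simp [annihilationCLM, SchwartzMap.derivCLM_apply]

lemma positionCLM_eq (hE : E ≠ 0) :
    positionCLM = (2 * E : ℂ)⁻¹ • (annihilationCLM E + creationCLM E) := by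
  have sum_eq : annihilationCLM E + creationCLM E = (2 * E : ℂ) • positionCLM := by
    rw [annihilationCLM, creationCLM, mul_smul]
    module
  rw [sum_eq, inv_smul_smul₀ (by simp [hE])]

lemma derivCLM_eq (E : ℝ) :
    SchwartzMap.derivCLM ℂ ℂ = (2 : ℂ)⁻¹ • (annihilationCLM E - creationCLM E) := by
  rw [annihilationCLM, creationCLM]
  module

/-- The Hermite functions as Schwartz functions, generated from the ground state by the creation
operator. -/
noncomputable def hermiteSchwartz (hE : 0 < E) : ℕ → 𝓢(ℝ, ℂ)
  | 0 => groundStateSchwartz hE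
  | n + 1 => (ladderCoeff E (n + 1) : ℂ)⁻¹ • creationCLM E (hermiteSchwartz hE n)

lemma creationCLM_hermiteSchwartz (hE : 0 < E) (n : ℕ) :
    creationCLM E (hermiteSchwartz hE n) =
      (ladderCoeff E (n + 1) : ℂ) • hermiteSchwartz hE (n + 1) :=
  (smul_inv_smul₀ (ofReal_ne_zero.2 (ladderCoeff_succ_pos hE n).ne') _).symm

@[simp]
lemma hermiteSchwartz_apply (hE : 0 < E) (n : ℕ) (q : ℝ) :
    hermiteSchwartz hE n q = hermiteFn E n q := by
  induction n generalizing q with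
  | zero => exact groundStateSchwartz_apply hE q
  | succ n ih =>
    have hderiv : deriv (hermiteSchwartz hE n) q =
        (ladderCoeff E n * hermiteFn E (n - 1) q - E * q * hermiteFn E n q : ℝ) := by
      rw [show ⇑(hermiteSchwartz hE n) = fun q => (hermiteFn E n q : ℂ) from funext ih]
      exact (hasDerivAt_hermiteFn hE n q).ofReal_comp.deriv
    have recurrence := congrArg ((↑) : ℝ → ℂ) (ladderCoeff_mul_hermiteFn_succ hE n q)
    have hs : (ladderCoeff E (n + 1) : ℂ) ≠ 0 := ofReal_ne_zero.2 (ladderCoeff_succ_pos hE n).ne'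
    refine mul_left_cancel₀ hs ?_
    rw [← smul_eq_mul, ← smul_apply, ← creationCLM_hermiteSchwartz,
      creationCLM_apply, ih, hderiv]
    push_cast at recurrence ⊢
    linear_combination -recurrence

lemma annihilationCLM_hermiteSchwartz (hE : 0 < E) (n : ℕ) :
    annihilationCLM E (hermiteSchwartz hE n) =
      (ladderCoeff E n : ℂ) • hermiteSchwartz hE (n - 1) := by
  ext q
  have hderiv : deriv (hermiteSchwartz hE n) q =
      (ladderCoeff E n * hermiteFn E (n - 1) q - E * q * hermiteFn E n q : ℝ) := by
    rw [show ⇑(hermiteSchwartz hE n) = fun q => (hermiteFn E n q : ℂ) from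
      funext (hermiteSchwartz_apply hE n)]
    exact (hasDerivAt_hermiteFn hE n q).ofReal_comp.deriv
  rw [annihilationCLM_apply, hderiv, smul_apply, hermiteSchwartz_apply, hermiteSchwartz_apply,
    smul_eq_mul]
  push_cast
  ring

lemma pow_positionCLM_hermiteSchwartz_mem_span (hE : 0 < E) (k n : ℕ) :
    (positionCLM ^ k) (hermiteSchwartz hE n) ∈
      Submodule.span ℂ (Set.range (hermiteSchwartz hE)) := by
  induction k generalizing n with
  | zero => exact Submodule.subset_span ⟨n, rfl⟩
  | succ k ih =>
    have step : positionCLM (hermiteSchwartz hE n) = (2 * E : ℂ)⁻¹ •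
        ((ladderCoeff E n : ℂ) • hermiteSchwartz hE (n - 1) +
          (ladderCoeff E (n + 1) : ℂ) • hermiteSchwartz hE (n + 1)) := by
      rw [positionCLM_eq hE.ne', smul_apply, add_apply, annihilationCLM_hermiteSchwartz,
        creationCLM_hermiteSchwartz]
    rw [pow_succ, mul_apply_eq_comp, step, map_smul, map_add, map_smul, map_smul]
    exact Submodule.smul_mem _ _ (Submodule.add_mem _ (Submodule.smul_mem _ _ (ih _))
      (Submodule.smul_mem _ _ (ih _)))

end Schwartz

section Coefficients

variable {E : ℝ}

/-- The `n`-th Hermite coefficient `∫ ψ_n f` of a Schwartz function. -/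
noncomputable def hermiteCoeff (E : ℝ) (n : ℕ) (f : 𝓢(ℝ, ℂ)) : ℂ :=
  ∫ q : ℝ, (hermiteFn E n q : ℂ) * f q

lemma integrable_mul_schwartz (f g : 𝓢(ℝ, ℂ)) : Integrable (fun x => f x * g x) :=
  (SchwartzMap.pairing (ContinuousLinearMap.mul ℂ ℂ) f g).integrable

lemma hermiteCoeff_eq_integral (hE : 0 < E) (n : ℕ) (f : 𝓢(ℝ, ℂ)) :
    hermiteCoeff E n f = ∫ q, hermiteSchwartz hE n q * f q := by
  simp only [hermiteCoeff, hermiteSchwartz_apply]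

lemma integral_mul_annihilationCLM (E : ℝ) (f g : 𝓢(ℝ, ℂ)) :
    ∫ x, f x * annihilationCLM E g x = ∫ x, creationCLM E f x * g x := by
  have hX : Integrable (fun x => f x * (E * (x * g x))) := by
    simpa using integrable_mul_schwartz f ((E : ℂ) • positionCLM g)
  have hX' : Integrable (fun x => E * (x * f x) * g x) := by
    simpa using integrable_mul_schwartz ((E : ℂ) • positionCLM f) g
  have hD : Integrable (fun x => f x * deriv g x) :=
    integrable_mul_schwartz f (SchwartzMap.derivCLM ℂ ℂ g)
  have hD' : Integrable (fun x => deriv f x * g x) :=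
    integrable_mul_schwartz (SchwartzMap.derivCLM ℂ ℂ f) g
  simp only [annihilationCLM_apply, creationCLM_apply, mul_add, sub_mul]
  rw [integral_add hX hD, integral_sub hX' hD', SchwartzMap.integral_mul_deriv_eq_neg_deriv_mul,
    sub_eq_add_neg]
  congr 2 with x
  ring

lemma integral_mul_creationCLM (E : ℝ) (f g : 𝓢(ℝ, ℂ)) :
    ∫ x, f x * creationCLM E g x = ∫ x, annihilationCLM E f x * g x := by
  simpa only [mul_comm] using (integral_mul_annihilationCLM E g f).symm

lemma hermiteCoeff_annihilationCLM (hE : 0 < E) (n : ℕ) (f : 𝓢(ℝ, ℂ)) :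
    hermiteCoeff E n (annihilationCLM E f) = ladderCoeff E (n + 1) * hermiteCoeff E (n + 1) f := by
  simp only [hermiteCoeff_eq_integral hE, integral_mul_annihilationCLM,
    creationCLM_hermiteSchwartz, smul_apply, smul_eq_mul, mul_assoc, integral_const_mul]

lemma hermiteCoeff_creationCLM (hE : 0 < E) (n : ℕ) (f : 𝓢(ℝ, ℂ)) :
    hermiteCoeff E n (creationCLM E f) = ladderCoeff E n * hermiteCoeff E (n - 1) f := by
  simp only [hermiteCoeff_eq_integral hE, integral_mul_creationCLM,
    annihilationCLM_hermiteSchwartz, smul_apply, smul_eq_mul, mul_assoc, integral_const_mul]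

lemma hermiteCoeff_add (hE : 0 < E) (n : ℕ) (f g : 𝓢(ℝ, ℂ)) :
    hermiteCoeff E n (f + g) = hermiteCoeff E n f + hermiteCoeff E n g := by
  simp only [hermiteCoeff_eq_integral hE, add_apply, mul_add]
  exact integral_add (integrable_mul_schwartz _ f) (integrable_mul_schwartz _ g)

lemma hermiteCoeff_smul (E : ℝ) (n : ℕ) (c : ℂ) (f : 𝓢(ℝ, ℂ)) :
    hermiteCoeff E n (c • f) = c * hermiteCoeff E n f := by
  simp only [hermiteCoeff, smul_apply, smul_eq_mul, mul_left_comm _ c, integral_const_mul]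

lemma hermiteCoeff_positionCLM (hE : 0 < E) (n : ℕ) (f : 𝓢(ℝ, ℂ)) :
    hermiteCoeff E n (positionCLM f) = (2 * E : ℂ)⁻¹ *
      (ladderCoeff E (n + 1) * hermiteCoeff E (n + 1) f +
        ladderCoeff E n * hermiteCoeff E (n - 1) f) := by
  rw [positionCLM_eq hE.ne', smul_apply, add_apply, hermiteCoeff_smul, hermiteCoeff_add hE,
    hermiteCoeff_annihilationCLM hE, hermiteCoeff_creationCLM hE]

lemma hermiteCoeff_derivCLM (hE : 0 < E) (n : ℕ) (f : 𝓢(ℝ, ℂ)) :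
    hermiteCoeff E n (SchwartzMap.derivCLM ℂ ℂ f) = (2 : ℂ)⁻¹ *
      (ladderCoeff E (n + 1) * hermiteCoeff E (n + 1) f -
        ladderCoeff E n * hermiteCoeff E (n - 1) f) := by
  rw [derivCLM_eq E, smul_apply, sub_apply, sub_eq_add_neg, ← neg_one_smul ℂ, hermiteCoeff_smul,
    hermiteCoeff_add hE, hermiteCoeff_smul, hermiteCoeff_annihilationCLM hE,
    hermiteCoeff_creationCLM hE]
  ring

lemma hermiteCoeff_zero_hermiteSchwartz_zero (hE : 0 < E) :
    hermiteCoeff E 0 (hermiteSchwartz hE 0) = 1 := by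
  have hsq (q : ℝ) : (hermiteFn E 0 q : ℂ) * hermiteSchwartz hE 0 q =
      (√(E / Real.pi) * Real.exp (-E * q ^ 2) : ℝ) := by
    have const_sq : (E / Real.pi) ^ ((1 : ℝ) / 4) * (E / Real.pi) ^ ((1 : ℝ) / 4) =
        √(E / Real.pi) := by
      rw [← Real.rpow_add (by positivity), Real.sqrt_eq_rpow]; norm_num
    rw [hermiteSchwartz_apply, ← ofReal_mul, hermiteFn_zero, mul_mul_mul_comm, const_sq,
      ← Real.exp_add]
    ring_nf
  have cancel : E / Real.pi * (Real.pi / E) = 1 := by field_simp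
  simp_rw [hermiteCoeff, hsq]
  rw [integral_complex_ofReal, integral_const_mul, integral_gaussian,
    ← Real.sqrt_mul (by positivity), cancel, Real.sqrt_one, ofReal_one]

lemma hermiteCoeff_hermiteSchwartz_symm (hE : 0 < E) (n m : ℕ) :
    hermiteCoeff E n (hermiteSchwartz hE m) = hermiteCoeff E m (hermiteSchwartz hE n) := by
  simp only [hermiteCoeff, hermiteSchwartz_apply, mul_comm]

lemma hermiteCoeff_zero_hermiteSchwartz_succ (hE : 0 < E) (m : ℕ) :
    hermiteCoeff E 0 (hermiteSchwartz hE (m + 1)) = 0 := by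
  have step := hermiteCoeff_creationCLM hE 0 (hermiteSchwartz hE m)
  have hs := (ladderCoeff_succ_pos hE m).ne'
  rw [creationCLM_hermiteSchwartz, hermiteCoeff_smul] at step
  simpa [hs] using step

lemma hermiteCoeff_hermiteSchwartz (hE : 0 < E) (n m : ℕ) :
    hermiteCoeff E n (hermiteSchwartz hE m) = if n = m then 1 else 0 := by
  induction n generalizing m with
  | zero =>
    rcases m with _ | m
    · simpa using hermiteCoeff_zero_hermiteSchwartz_zero hE
    · simpa using hermiteCoeff_zero_hermiteSchwartz_succ hE m
  | succ n ih =>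
    rcases m with _ | m
    · rw [hermiteCoeff_hermiteSchwartz_symm]
      simpa using hermiteCoeff_zero_hermiteSchwartz_succ hE n
    · have step := hermiteCoeff_creationCLM hE (n + 1) (hermiteSchwartz hE m)
      rw [creationCLM_hermiteSchwartz, hermiteCoeff_smul, Nat.add_sub_cancel, ih] at step
      have hs : (ladderCoeff E (m + 1) : ℂ) ≠ 0 :=
        ofReal_ne_zero.2 (ladderCoeff_succ_pos hE m).ne'
      refine mul_left_cancel₀ hs (step.trans ?_)
      rcases eq_or_ne n m with rfl | hnm
      · simp
      · simp [hnm]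

end Coefficients

section Completeness

lemma ae_eq_zero_of_fourier_eq_zero {V F : Type*} [NormedAddCommGroup V] [InnerProductSpace ℝ V]
    [FiniteDimensional ℝ V] [MeasurableSpace V] [BorelSpace V] [NormedAddCommGroup F]
    [NormedSpace ℂ F] [CompleteSpace F] {f : V → F} (hf : Integrable f) (hzero : 𝓕 f = 0) :
    ∀ᵐ x, f x = 0 := by
  refine ae_eq_zero_of_integral_contDiff_smul_eq_zero hf.locallyIntegrable
    fun g g_smooth g_supp => ?_
  have g_supp' : HasCompactSupport (ofRealCLM ∘ g) := g_supp.comp_left rfl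
  have g_smooth' : ContDiff ℝ ∞ (ofRealCLM ∘ g) := by fun_prop
  let G : 𝓢(V, ℂ) := g_supp'.toSchwartzMap g_smooth'
  calc ∫ x, g x • f x = ∫ x, 𝓕 ⇑(𝓕⁻ G : 𝓢(V, ℂ)) x • f x := by
        rw [← SchwartzMap.fourier_coe, FourierTransform.fourier_fourierInv_eq]
        simp [G]
    _ = ∫ x, (𝓕⁻ G : 𝓢(V, ℂ)) x • 𝓕 f x := by
        simpa using! VectorFourier.integral_fourierIntegral_smul_eq_flip (L := innerₗ V)
          Real.continuous_fourierChar continuous_inner (𝓕⁻ G : 𝓢(V, ℂ)).integrable hf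
    _ = 0 := by simp [hzero]

variable {F : Type*} [NormedAddCommGroup F] [NormedSpace ℂ F]

lemma hasSum_integral_moments_fourier {f : ℝ → F}
    (hf : ∀ c : ℝ, Integrable (fun x => Real.exp (c * |x|) • f x)) (ξ : ℝ) :
    HasSum (fun k : ℕ => ((-2 * Real.pi * ξ * I : ℂ) ^ k / k.factorial) • ∫ x : ℝ, (x ^ k) • f x)
      (𝓕 f ξ) := by
  have hmeas : AEStronglyMeasurable f := by simpa using (hf 0).aestronglyMeasurable
  simp only [Real.fourier_real_eq_integral_exp_smul, ← integral_smul]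
  refine hasSum_integral_of_dominated_convergence
    (fun k x => |2 * Real.pi * ξ * x| ^ k / k.factorial * ‖f x‖)
    (fun k => (((by fun_prop : Continuous fun x : ℝ => x ^ k).aestronglyMeasurable.smul
      hmeas).const_smul _)) (fun k => ae_of_all _ fun x => le_of_eq ?_)
    (ae_of_all _ fun x => (Real.summable_pow_div_factorial _).mul_right _) ?_
    (ae_of_all _ fun x => ?_)
  · simp only [norm_smul, norm_div, norm_mul, norm_pow, norm_neg, norm_real, norm_I, norm_natCast,
      norm_ofNat, Real.norm_eq_abs, abs_mul, Nat.abs_ofNat, mul_one]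
    ring
  · refine (hf |2 * Real.pi * ξ|).norm.congr (ae_of_all _ fun x => ?_)
    beta_reduce
    rw [norm_smul, Real.norm_eq_abs, Real.abs_exp, tsum_mul_right, ← abs_mul,
      Real.exp_eq_exp_ℝ, NormedSpace.exp_eq_tsum_div]
  · have expSeries := NormedSpace.expSeries_div_hasSum_exp ((-2 * Real.pi * x * ξ : ℝ) * I)
    rw [← Complex.exp_eq_exp_ℂ] at expSeries
    refine (expSeries.smul_const (f x)).congr_fun fun k => ?_
    rw [← Complex.coe_smul, smul_smul]
    congr 1
    push_cast
    ring

lemma ae_eq_zero_of_moments_eq_zero [CompleteSpace F] {f : ℝ → F}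
    (hf : ∀ c : ℝ, Integrable (fun x => Real.exp (c * |x|) • f x))
    (hmoments : ∀ k : ℕ, ∫ x : ℝ, (x ^ k) • f x = 0) : ∀ᵐ x, f x = 0 := by
  refine ae_eq_zero_of_fourier_eq_zero (by simpa using hf 0) (funext fun ξ => ?_)
  have series := hasSum_integral_moments_fourier hf ξ
  simp only [hmoments, smul_zero] at series
  exact series.unique hasSum_zero

end Completeness

section Parseval

variable {E : ℝ}

lemma memLp_two_exp_mul_abs_mul_hermiteFn_zero (hE : 0 < E) (c : ℝ) :
    MemLp (fun x : ℝ => Real.exp (c * |x|) * hermiteFn E 0 x) 2 := by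
  have hcont : Continuous fun x : ℝ => Real.exp (c * |x|) * hermiteFn E 0 x := by
    simp only [hermiteFn_zero]
    fun_prop
  rw [memLp_two_iff_integrable_sq hcont.aestronglyMeasurable]
  refine ((integrable_exp_neg_mul_sq (half_pos hE)).const_mul
    (((E / Real.pi) ^ ((1 : ℝ) / 4)) ^ 2 * Real.exp (2 * c ^ 2 / E))).mono'
    (hcont.pow 2).aestronglyMeasurable (ae_of_all _ fun x => ?_)
  -- completing the square: `2c|x| - Ex² ≤ 2c²/E - Ex²/2`
  have exponent_le : c * |x| + -(E * x ^ 2) / 2 + (c * |x| + -(E * x ^ 2) / 2) ≤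
      2 * c ^ 2 / E + -(E / 2) * x ^ 2 := by
    have square : 2 * c ^ 2 / E + -(E / 2) * x ^ 2 -
        (c * |x| + -(E * x ^ 2) / 2 + (c * |x| + -(E * x ^ 2) / 2)) =
        (E * |x| - 2 * c) ^ 2 / (2 * E) := by
      rw [← sq_abs x]; field_simp; ring
    exact sub_nonneg.1 (square ▸ by positivity)
  calc ‖(Real.exp (c * |x|) * hermiteFn E 0 x) ^ 2‖
      = ((E / Real.pi) ^ ((1 : ℝ) / 4)) ^ 2 *
        Real.exp (c * |x| + -(E * x ^ 2) / 2 + (c * |x| + -(E * x ^ 2) / 2)) := by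
        rw [Real.norm_of_nonneg (sq_nonneg _), hermiteFn_zero]
        simp only [Real.exp_add]
        ring
    _ ≤ _ := by
        rw [mul_assoc, ← Real.exp_add]
        gcongr

lemma orthogonal_span_hermiteSchwartz_toLp (hE : 0 < E) :
    (Submodule.span ℂ (Set.range fun n => (hermiteSchwartz hE n).toLp 2))ᗮ = ⊥ := by
  refine (Submodule.eq_bot_iff _).2 fun g hg => ?_
  have toLp_mem (k : ℕ) : ((positionCLM ^ k) (hermiteSchwartz hE 0)).toLp 2 ∈
      Submodule.span ℂ (Set.range fun n => (hermiteSchwartz hE n).toLp 2) := by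
    have mapped := Submodule.mem_map_of_mem (f := (SchwartzMap.toLpCLM ℂ ℂ 2 volume).toLinearMap)
      (pow_positionCLM_hermiteSchwartz_mem_span hE k 0)
    rwa [Submodule.map_span, ← Set.range_comp] at mapped
  have moments (k : ℕ) : ∫ x : ℝ, (x ^ k) • (hermiteFn E 0 x • g x) = 0 := by
    rw [← Submodule.inner_right_of_mem_orthogonal (toLp_mem k) hg, L2.inner_def]
    refine integral_congr_ae ?_
    filter_upwards [((positionCLM ^ k) (hermiteSchwartz hE 0)).coeFn_toLp 2] with x hx
    rw [hx, pow_positionCLM_apply, hermiteSchwartz_apply]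
    simp [mul_assoc, mul_comm (g x)]
  have integrable (c : ℝ) :
      Integrable fun x => Real.exp (c * |x|) • (hermiteFn E 0 x • g x) := by
    have product := memLp_one_iff_integrable.1
      ((Lp.memLp g).smul (memLp_two_exp_mul_abs_mul_hermiteFn_zero hE c))
    exact product.congr (ae_of_all _ fun x => by simp only [Pi.smul_apply', smul_smul])
  refine (Lp.eq_zero_iff_ae_eq_zero).2 ?_
  filter_upwards [ae_eq_zero_of_moments_eq_zero integrable moments] with x hx
  have hpos : hermiteFn E 0 x ≠ 0 := by rw [hermiteFn_zero]; positivity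
  exact (smul_eq_zero_iff_right hpos).1 hx

lemma inner_hermiteSchwartz_toLp (hE : 0 < E) (n : ℕ) (f : 𝓢(ℝ, ℂ)) :
    inner ℂ ((hermiteSchwartz hE n).toLp 2) (f.toLp 2) = hermiteCoeff E n f := by
  rw [SchwartzMap.inner_toL2_toL2_eq _ _ volume, hermiteCoeff]
  refine integral_congr_ae (ae_of_all _ fun x => ?_)
  simp [mul_comm]

lemma orthonormal_hermiteSchwartz_toLp (hE : 0 < E) :
    Orthonormal ℂ fun n => (hermiteSchwartz hE n).toLp 2 := by
  rw [orthonormal_iff_ite]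
  intro n m
  rw [inner_hermiteSchwartz_toLp, hermiteCoeff_hermiteSchwartz]

/-- The Hermite functions as an orthonormal basis of `L²(ℝ)`. -/
noncomputable def hermiteBasis (hE : 0 < E) : HilbertBasis ℕ ℂ (Lp ℂ 2 (volume : Measure ℝ)) :=
  HilbertBasis.mkOfOrthogonalEqBot (orthonormal_hermiteSchwartz_toLp hE)
    (orthogonal_span_hermiteSchwartz_toLp hE)

lemma hermiteBasis_repr_toLp (hE : 0 < E) (f : 𝓢(ℝ, ℂ)) (n : ℕ) :
    (hermiteBasis hE).repr (f.toLp 2) n = hermiteCoeff E n f := by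
  rw [HilbertBasis.repr_apply_apply, hermiteBasis, HilbertBasis.coe_mkOfOrthogonalEqBot,
    inner_hermiteSchwartz_toLp]

lemma hasSum_sq_norm_hermiteCoeff (hE : 0 < E) (f : 𝓢(ℝ, ℂ)) :
    HasSum (fun n => ‖hermiteCoeff E n f‖ ^ 2) (∫ x, ‖f x‖ ^ 2) := by
  have norm_sq : ‖f.toLp 2‖ ^ 2 = ∫ x, ‖f x‖ ^ 2 := by
    rw [SchwartzMap.norm_toLp' two_ne_zero ENNReal.ofNat_ne_top, ← Real.rpow_natCast,
      ← Real.rpow_mul (integral_nonneg fun x => by positivity)]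
    simp
  have parseval : HasSum (fun n => ‖(hermiteBasis hE).repr (f.toLp 2) n‖ ^ 2)
      (‖(hermiteBasis hE).repr (f.toLp 2)‖ ^ 2) := by
    apply_mod_cast lp.hasSum_norm ?_ ((hermiteBasis hE).repr (f.toLp 2))
    simp
  simpa only [hermiteBasis_repr_toLp, LinearIsometryEquiv.norm_map, norm_sq] using parseval

end Parseval

section SupBounds

lemma norm_sq_le_integral_add_integral_deriv {F : Type*} [NormedAddCommGroup F]
    [InnerProductSpace ℝ F] (f : 𝓢(ℝ, F)) (x : ℝ) :
    ‖f x‖ ^ 2 ≤ (∫ y, ‖f y‖ ^ 2) + ∫ y, ‖deriv f y‖ ^ 2 := by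
  have hf : Integrable fun y => ‖f y‖ ^ 2 := (f.memLp 2).integrable_norm_pow two_ne_zero
  have hf' : Integrable fun y => ‖deriv f y‖ ^ 2 :=
    ((SchwartzMap.derivCLM ℝ F f).memLp 2 volume).integrable_norm_pow two_ne_zero
  have hderiv (y : ℝ) : HasDerivAt (fun y => ‖f y‖ ^ 2) (2 * inner ℝ (f y) (deriv f y)) y := by
    simpa using (f.hasDerivAt y).norm_sq
  have bound (y : ℝ) : ‖2 * inner ℝ (f y) (deriv f y)‖ ≤ ‖f y‖ ^ 2 + ‖deriv f y‖ ^ 2 := by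
    rw [norm_mul, Real.norm_ofNat]
    linarith [norm_inner_le_norm (𝕜 := ℝ) (f y) (deriv f y),
      two_mul_le_add_sq ‖f y‖ ‖deriv f y‖]
  have hderiv_integrable : Integrable fun y => 2 * inner ℝ (f y) (deriv f y) :=
    (hf.add hf').mono' ((f.continuous.inner
      (SchwartzMap.derivCLM ℝ F f).continuous).const_mul 2).aestronglyMeasurable
      (ae_of_all _ bound)
  have vanishes : Tendsto (fun y => ‖f y‖ ^ 2) atBot (nhds 0) :=
    tendsto_zero_of_hasDerivAt_of_integrableOn_Iic (a := x) (fun y _ => hderiv y)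
      hderiv_integrable.integrableOn hf.integrableOn
  have ftc := integral_Iic_of_hasDerivAt_of_tendsto' (a := x) (fun y _ => hderiv y)
    hderiv_integrable.integrableOn vanishes
  calc ‖f x‖ ^ 2 = ∫ y in Set.Iic x, 2 * inner ℝ (f y) (deriv f y) := by rw [ftc, sub_zero]
    _ ≤ ∫ y in Set.Iic x, (‖f y‖ ^ 2 + ‖deriv f y‖ ^ 2) :=
      setIntegral_mono hderiv_integrable.integrableOn (hf.add hf').integrableOn
        fun y => (le_abs_self _).trans (bound y)
    _ ≤ ∫ y, (‖f y‖ ^ 2 + ‖deriv f y‖ ^ 2) :=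
      setIntegral_le_integral (hf.add hf') (ae_of_all _ fun y => by positivity)
    _ = (∫ y, ‖f y‖ ^ 2) + ∫ y, ‖deriv f y‖ ^ 2 := integral_add hf hf'

variable {E : ℝ}

lemma norm_hermiteCoeff_le (hE : 0 < E) (n : ℕ) {f : 𝓢(ℝ, ℂ)} {S : ℝ}
    (hS : ∀ x : ℝ, (1 + x ^ 2) * ‖f x‖ ≤ S) : ‖hermiteCoeff E n f‖ ≤ √Real.pi * S := by
  have hS₀ : 0 ≤ S := le_trans (by positivity) (hS 0)
  have hf_sq (x : ℝ) : ‖f x‖ ^ 2 ≤ S ^ 2 * (1 + x ^ 2)⁻¹ := by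
    have one_le : 1 ≤ 1 + x ^ 2 := le_add_of_nonneg_right (sq_nonneg x)
    rw [← div_eq_mul_inv, le_div_iff₀ (by positivity)]
    calc ‖f x‖ ^ 2 * (1 + x ^ 2) ≤ ‖f x‖ ^ 2 * (1 + x ^ 2) ^ 2 := by
          gcongr
          exact le_self_pow₀ one_le two_ne_zero
      _ = ((1 + x ^ 2) * ‖f x‖) ^ 2 := by ring
      _ ≤ S ^ 2 := by gcongr; exact hS x
  refine le_of_sq_le_sq ?_ (by positivity)
  calc ‖hermiteCoeff E n f‖ ^ 2 ≤ ∫ x, ‖f x‖ ^ 2 :=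
        le_hasSum (hasSum_sq_norm_hermiteCoeff hE f) n fun _ _ => sq_nonneg _
    _ ≤ ∫ x : ℝ, S ^ 2 * (1 + x ^ 2)⁻¹ :=
        integral_mono ((f.memLp 2).integrable_norm_pow two_ne_zero)
          (integrable_inv_one_add_sq.const_mul _) hf_sq
    _ = (√Real.pi * S) ^ 2 := by
        rw [integral_const_mul, integral_univ_inv_one_add_sq, mul_pow,
          Real.sq_sqrt Real.pi_nonneg, mul_comm]

end SupBounds

section Weights

/-- The Gel'fand–Shilov weight `n ^ (α n)`; the convention `0 ^ 0 = 1` is that of `Real.rpow`. -/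
noncomputable def gevreyWeight (α : ℝ) (n : ℕ) : ℝ :=
  (n : ℝ) ^ (α * (n : ℝ))

@[simp]
lemma gevreyWeight_zero (α : ℝ) : gevreyWeight α 0 = 1 := by
  simp [gevreyWeight]

lemma gevreyWeight_eq_exp (α : ℝ) (n : ℕ) :
    gevreyWeight α n = Real.exp (α * (n * Real.log n)) := by
  rcases n.eq_zero_or_pos with rfl | hn
  · simp
  · rw [gevreyWeight, Real.rpow_def_of_pos (Nat.cast_pos.2 hn)]
    ring_nf

lemma gevreyWeight_pos (α : ℝ) (n : ℕ) : 0 < gevreyWeight α n := by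
  rw [gevreyWeight_eq_exp]
  exact Real.exp_pos _

lemma gevreyWeight_le_rpow_pow {α : ℝ} {n N : ℕ} (hα : 0 ≤ α) (h : n ≤ N) :
    gevreyWeight α n ≤ ((N : ℝ) ^ α) ^ n := by
  rw [← Real.rpow_mul_natCast N.cast_nonneg]
  exact Real.rpow_le_rpow n.cast_nonneg (Nat.cast_le.2 h) (by positivity)

lemma gevreyWeight_eq_pow (α : ℝ) (n : ℕ) : gevreyWeight α n = ((n : ℝ) ^ α) ^ n :=
  Real.rpow_mul_natCast n.cast_nonneg α n

lemma sqrt_pow_le_gevreyWeight {α : ℝ} (hα : 1 / 2 ≤ α) (n : ℕ) :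
    √(n : ℝ) ^ n ≤ gevreyWeight α n := by
  rcases n.eq_zero_or_pos with rfl | hn
  · simp
  · rw [gevreyWeight_eq_pow, Real.sqrt_eq_rpow]
    gcongr
    exact Nat.one_le_cast.2 hn

lemma natCast_mul_log_add_le (a b : ℕ) :
    (a : ℝ) * Real.log (a + b) ≤ a * Real.log a + b := by
  rcases a.eq_zero_or_pos with rfl | ha
  · simp
  have ha' : (0 : ℝ) < a := Nat.cast_pos.2 ha
  have log_le : Real.log ((a + b) / a) ≤ (a + b) / a - 1 :=
    Real.log_le_sub_one_of_pos (by positivity)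
  rw [Real.log_div (by positivity) ha'.ne'] at log_le
  calc (a : ℝ) * Real.log (a + b)
      = a * Real.log a + a * (Real.log (a + b) - Real.log a) := by ring
    _ ≤ a * Real.log a + a * ((a + b) / a - 1) := by gcongr
    _ = a * Real.log a + b := by field_simp; ring

lemma gevreyWeight_add_le {α : ℝ} (hα : 0 ≤ α) (a b : ℕ) :
    gevreyWeight α (a + b) ≤ Real.exp α ^ (a + b) * (gevreyWeight α a * gevreyWeight α b) := by
  have hab := natCast_mul_log_add_le a b
  have hba := natCast_mul_log_add_le b a
  rw [add_comm (b : ℝ)] at hba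
  simp only [gevreyWeight_eq_exp, ← Real.exp_nat_mul, ← Real.exp_add, Nat.cast_add]
  rw [Real.exp_le_exp]
  linear_combination α * hab + α * hba

lemma pow_div_gevreyWeight_le_exp {α y : ℝ} (hα : 0 < α) (hy : 0 ≤ y) (m : ℕ) :
    y ^ m / gevreyWeight α m ≤ Real.exp (α * y ^ α⁻¹) := by
  have factorial_bound : (y ^ α⁻¹) ^ m ≤ Real.exp (y ^ α⁻¹) * (m : ℝ) ^ m := by
    have h := Real.pow_div_factorial_le_exp (y ^ α⁻¹) (by positivity) m
    rw [div_le_iff₀ (by positivity)] at h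
    refine h.trans ?_
    gcongr
    exact_mod_cast m.factorial_le_pow
  rw [div_le_iff₀ (gevreyWeight_pos α m)]
  calc y ^ m = ((y ^ α⁻¹) ^ m) ^ α := by
        rw [← Real.rpow_pow_comm (by positivity), Real.rpow_inv_rpow hy hα.ne']
    _ ≤ (Real.exp (y ^ α⁻¹) * (m : ℝ) ^ m) ^ α := by gcongr
    _ = Real.exp (α * y ^ α⁻¹) * gevreyWeight α m := by
        rw [Real.mul_rpow (by positivity) (by positivity), ← Real.exp_mul, mul_comm _ α,
          gevreyWeight_eq_pow, Real.rpow_pow_comm (by positivity)]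

lemma Omega_eq (α y : ℝ) : Omega α y = ⨆ m : ℕ, Real.log (y ^ m / gevreyWeight α m) := by
  simp only [Omega, gevreyWeight, Real.rpow_neg (Nat.cast_nonneg _), div_eq_mul_inv]

lemma pow_le_exp_Omega_mul {α y : ℝ} (hα : 0 < α) (hy : 0 ≤ y) (m : ℕ) :
    y ^ m ≤ Real.exp (Omega α y) * gevreyWeight α m := by
  have hw (m : ℕ) := gevreyWeight_pos α m
  rw [← div_le_iff₀ (hw m)]
  have hm₀ : 0 ≤ y ^ m / gevreyWeight α m := div_nonneg (by positivity) (hw m).le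
  rcases hm₀.eq_or_lt with hm | hm
  · exact hm.symm.le.trans (Real.exp_pos _).le
  rw [← Real.log_le_iff_le_exp hm, Omega_eq]
  have bounded : BddAbove (Set.range fun m : ℕ => Real.log (y ^ m / gevreyWeight α m)) := by
    refine ⟨α * y ^ α⁻¹, ?_⟩
    rintro _ ⟨k, rfl⟩
    rcases (div_nonneg (by positivity) (hw k).le : 0 ≤ y ^ k / gevreyWeight α k).eq_or_lt
      with hk | hk
    · simp only [← hk, Real.log_zero]
      positivity
    · exact (Real.log_le_iff_le_exp hk).2 (pow_div_gevreyWeight_le_exp hα hy k)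
  exact le_ciSup bounded m

lemma exp_Omega_mul_le {α y c C : ℝ} (hy : 0 ≤ y) (hc : 0 ≤ c)
    (h : ∀ m : ℕ, y ^ m * c ≤ C * gevreyWeight α m) : Real.exp (Omega α y) * c ≤ C := by
  have hcC : c ≤ C := by simpa using h 0
  rcases hc.eq_or_lt with rfl | hc
  · simpa using hcC
  rw [← le_div_iff₀ hc, ← Real.le_log_iff_exp_le (div_pos (hc.trans_le hcC) hc), Omega_eq]
  refine ciSup_le fun m => ?_
  have hw := gevreyWeight_pos α m
  rcases (div_nonneg (by positivity) hw.le : 0 ≤ y ^ m / gevreyWeight α m).eq_or_lt with hm | hm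
  · -- A vanishing term enters `Omega` as `log 0 = 0`, which the term `m = 0` already dominates.
    rw [← hm, Real.log_zero]
    exact Real.log_nonneg ((one_le_div hc).2 hcC)
  · refine Real.log_le_log hm ?_
    rw [div_le_div_iff₀ hw hc]
    exact h m

end Weights

section Decay

/-- Ultrafast decay of a sequence in moment form: `‖a n‖ ≤ C Kᵏ k ^ (α k) / √n ^ k` for all `k`,
that is, `‖a n‖ ≤ C exp (-Ω (√n / K))`. -/
def UltrafastDecay (α : ℝ) (a : ℕ → ℂ) : Prop :=
  ∃ C, ∃ K > (0 : ℝ), ∀ k n : ℕ, √(n : ℝ) ^ k * ‖a n‖ ≤ C * K ^ k * gevreyWeight α k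

variable {α : ℝ} {a : ℕ → ℂ}

lemma UltrafastDecay.exists_exp_Omega_mul_le (hα : 0 ≤ α) (h : UltrafastDecay α a) :
    ∃ κ > (0 : ℝ), ∃ D, ∀ n : ℕ, Real.exp (Omega α (κ * √(n : ℝ))) * (n * ‖a n‖) ≤ D := by
  obtain ⟨C, K, hK, h⟩ := h
  have hC : 0 ≤ C := (norm_nonneg (a 0)).trans (by simpa using h 0 0)
  set L := Real.exp α
  have hL₀ : 0 < L := Real.exp_pos α
  refine ⟨(K * L)⁻¹, by positivity, C * (K * L) ^ 2 * gevreyWeight α 2, fun n => ?_⟩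
  refine exp_Omega_mul_le (by positivity) (by positivity) fun m => ?_
  calc ((K * L)⁻¹ * √(n : ℝ)) ^ m * (n * ‖a n‖)
      = ((K * L)⁻¹) ^ m * (√(n : ℝ) ^ (m + 2) * ‖a n‖) := by
        rw [pow_add, Real.sq_sqrt n.cast_nonneg]; ring
    _ ≤ ((K * L)⁻¹) ^ m * (C * K ^ (m + 2) * gevreyWeight α (m + 2)) := by
        gcongr ?_ * ?_
        exact h (m + 2) n
    _ ≤ ((K * L)⁻¹) ^ m *
          (C * K ^ (m + 2) * (L ^ (m + 2) * (gevreyWeight α m * gevreyWeight α 2))) := by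
        gcongr
        exact gevreyWeight_add_le hα m 2
    _ = C * (K * L) ^ 2 * gevreyWeight α 2 * gevreyWeight α m := by
        rw [inv_pow, mul_pow, pow_add, pow_add]; field_simp

lemma UltrafastDecay.exists_summable (hα : 0 ≤ α) (h : UltrafastDecay α a) :
    ∃ κ > (0 : ℝ), Summable fun n : ℕ =>
      ‖a n‖ ^ 2 * Real.exp (2 * Omega α (κ * √(n : ℝ))) := by
  obtain ⟨κ, hκ, D, hD⟩ := h.exists_exp_Omega_mul_le hα
  refine ⟨κ, hκ, (summable_nat_add_iff 1).1 ?_⟩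
  have majorant : Summable fun n : ℕ => D ^ 2 * (1 / ((n + 1 : ℕ) : ℝ) ^ 2) :=
    ((summable_nat_add_iff 1).2 (Real.summable_one_div_nat_pow.2 one_lt_two)).mul_left _
  refine majorant.of_nonneg_of_le (fun n => by positivity) fun n => ?_
  rw [mul_one_div, le_div_iff₀ (by positivity)]
  set N : ℕ := n + 1
  calc ‖a N‖ ^ 2 * Real.exp (2 * Omega α (κ * √(N : ℝ))) * (N : ℝ) ^ 2
      = (Real.exp (Omega α (κ * √(N : ℝ))) * (N * ‖a N‖)) ^ 2 := by
        rw [two_mul, Real.exp_add]; ring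
    _ ≤ D ^ 2 := by gcongr; exact hD N

lemma ultrafastDecay_of_summable {κ : ℝ} (hα : 0 < α) (hκ : 0 < κ)
    (h : Summable fun n : ℕ => ‖a n‖ ^ 2 * Real.exp (2 * Omega α (κ * √(n : ℝ)))) :
    UltrafastDecay α a := by
  set S := ∑' n : ℕ, ‖a n‖ ^ 2 * Real.exp (2 * Omega α (κ * √(n : ℝ)))
  refine ⟨√S, κ⁻¹, inv_pos.2 hκ, fun k n => ?_⟩
  have term_le : Real.exp (Omega α (κ * √(n : ℝ))) * ‖a n‖ ≤ √S := by
    refine Real.le_sqrt_of_sq_le (le_trans (le_of_eq ?_) (h.le_tsum n fun j _ => by positivity))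
    rw [two_mul, Real.exp_add]
    ring
  have hw := gevreyWeight_pos α k
  calc √(n : ℝ) ^ k * ‖a n‖ = κ⁻¹ ^ k * ((κ * √(n : ℝ)) ^ k * ‖a n‖) := by
        rw [mul_pow, inv_pow]; field_simp
    _ ≤ κ⁻¹ ^ k * (Real.exp (Omega α (κ * √(n : ℝ))) * gevreyWeight α k * ‖a n‖) := by
        gcongr
        exact pow_le_exp_Omega_mul hα (by positivity) k
    _ = κ⁻¹ ^ k * gevreyWeight α k * (Real.exp (Omega α (κ * √(n : ℝ))) * ‖a n‖) := by ring
    _ ≤ κ⁻¹ ^ k * gevreyWeight α k * √S := by gcongr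
    _ = √S * κ⁻¹ ^ k * gevreyWeight α k := by ring

lemma ultrafastDecay_iff_exists_summable (hα : 0 < α) :
    UltrafastDecay α a ↔ ∃ κ > (0 : ℝ), Summable fun n : ℕ =>
      ‖a n‖ ^ 2 * Real.exp (2 * Omega α (κ * √(n : ℝ))) :=
  ⟨fun h => h.exists_summable hα.le, fun ⟨_, hκ, h⟩ => ultrafastDecay_of_summable hα hκ h⟩

lemma sqrt_add_pow_le {x y : ℝ} (hx : 0 ≤ x) (hy : 0 ≤ y) (m : ℕ) :
    √(x + y) ^ m ≤ 2 ^ (m - 1) * (√x ^ m + √y ^ m) := by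
  have sqrt_add_le : √(x + y) ≤ √x + √y := by
    simpa only [Real.sqrt_eq_rpow] using
      Real.rpow_add_le_add_rpow hx hy one_half_pos.le one_half_lt_one.le
  calc √(x + y) ^ m ≤ (√x + √y) ^ m := by gcongr
    _ ≤ 2 ^ (m - 1) * (√x ^ m + √y ^ m) := add_pow_le (by positivity) (by positivity) m

lemma UltrafastDecay.exists_sqrt_add_pow_mul_norm_le (hα : 1 / 2 ≤ α) (h : UltrafastDecay α a) :
    ∃ C, ∃ K ≥ (1 : ℝ), ∀ m n : ℕ,
      √(n + m : ℕ) ^ m * ‖a n‖ ≤ C * K ^ m * gevreyWeight α m := by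
  obtain ⟨C, K, hK, h⟩ := h
  have norm_le (n : ℕ) : ‖a n‖ ≤ C := by simpa using h 0 n
  have hC : 0 ≤ C := (norm_nonneg _).trans (norm_le 0)
  refine ⟨2 * C, 2 * max K 1, by linarith [le_max_right K 1], fun m n => ?_⟩
  have hw := gevreyWeight_pos α m
  have n_part : √n ^ m * ‖a n‖ ≤ C * max K 1 ^ m * gevreyWeight α m := by
    refine (h m n).trans ?_
    gcongr
    exact le_max_left K 1
  have m_part : √m ^ m * ‖a n‖ ≤ C * max K 1 ^ m * gevreyWeight α m := by
    calc √m ^ m * ‖a n‖ ≤ gevreyWeight α m * C := by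
          gcongr
          · exact sqrt_pow_le_gevreyWeight hα m
          · exact norm_le n
      _ ≤ gevreyWeight α m * (C * max K 1 ^ m) := by
          gcongr
          exact le_mul_of_one_le_right hC (one_le_pow₀ (le_max_right K 1))
      _ = _ := mul_comm _ _
  calc √(n + m : ℕ) ^ m * ‖a n‖ ≤ 2 ^ (m - 1) * (√n ^ m + √m ^ m) * ‖a n‖ := by
        rw [Nat.cast_add]
        gcongr
        exact sqrt_add_pow_le n.cast_nonneg m.cast_nonneg m
    _ ≤ 2 ^ m * (√n ^ m * ‖a n‖ + √m ^ m * ‖a n‖) := by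
        rw [mul_assoc, add_mul]
        gcongr <;> norm_num
    _ ≤ 2 ^ m * (C * max K 1 ^ m * gevreyWeight α m + C * max K 1 ^ m * gevreyWeight α m) := by
        gcongr
    _ = 2 * C * (2 * max K 1) ^ m * gevreyWeight α m := by rw [mul_pow]; ring

end Decay

section LadderEstimates

local notation "X" => positionCLM
local notation "D" => SchwartzMap.derivCLM ℂ ℂ

lemma pow_derivCLM_apply (b : ℕ) (f : 𝓢(ℝ, ℂ)) (x : ℝ) : (D ^ b) f x = iteratedDeriv b f x := by
  induction b generalizing x with
  | zero => simp
  | succ b ih =>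
    rw [pow_succ', mul_apply_eq_comp, SchwartzMap.derivCLM_apply, iteratedDeriv_succ, funext ih]

lemma gelfandShilov_iff_exists_norm_le {α : ℝ} (f : 𝓢(ℝ, ℂ)) :
    GelfandShilov α f ↔ ∃ C, ∃ M ≥ (1 : ℝ), ∀ a b : ℕ, ∀ x : ℝ,
      ‖(X ^ a) ((D ^ b) f) x‖ ≤ C * M ^ (a + b) * (gevreyWeight α a * gevreyWeight α b) := by
  have bound_iff (C M : ℝ) (a b : ℕ) (x : ℝ) :
      ‖(x : ℂ) ^ a * iteratedDeriv b f x‖ ≤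
          C * M ^ (b + a) * (b : ℝ) ^ (α * (b : ℝ)) * (a : ℝ) ^ (α * (a : ℝ)) ↔
        ‖(X ^ a) ((D ^ b) f) x‖ ≤ C * M ^ (a + b) * (gevreyWeight α a * gevreyWeight α b) := by
    rw [pow_positionCLM_apply, pow_derivCLM_apply, gevreyWeight, gevreyWeight, add_comm b,
      mul_assoc, mul_comm ((a : ℝ) ^ _)]
  have hw (n : ℕ) := gevreyWeight_pos α n
  constructor
  · rintro ⟨-, C, hC, M, hM, h⟩
    refine ⟨C, max M 1, le_max_right M 1, fun a b x => ((bound_iff C M a b x).1 (h b a x)).trans ?_⟩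
    have ha := hw a
    have hb := hw b
    gcongr
    exact le_max_left M 1
  · rintro ⟨C, M, hM, h⟩
    refine ⟨f.smooth _, max C 1, by positivity, M, by positivity, fun b a x => ?_⟩
    rw [bound_iff]
    have ha := hw a
    have hb := hw b
    exact (h a b x).trans (by gcongr; exact le_max_left C 1)

lemma pow_mul_eq_mul_pow_add {R : Type*} [Semiring R] {d x : R} (h : d * x = x * d + 1) (n : ℕ) :
    d ^ n * x = x * d ^ n + n * d ^ (n - 1) := by
  induction n with
  | zero => simp
  | succ n ih =>
    have shift : (n : R) * d ^ (n - 1) * d = n * d ^ n := by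
      rcases n with _ | n
      · simp
      · rw [mul_assoc, Nat.add_sub_cancel, ← pow_succ]
    rw [pow_succ, mul_assoc, h, mul_add, mul_one, ← mul_assoc, ih, add_mul, shift, mul_assoc,
      Nat.cast_succ, Nat.add_sub_cancel, add_mul, one_mul, add_assoc]

lemma derivCLM_mul_positionCLM : D * X = X * D + 1 := by
  ext f x
  have hderiv : deriv (X f) x = f x + x * deriv f x := by
    rw [show ⇑(X f) = (fun y : ℝ => (y : ℂ)) * f from funext (positionCLM_apply f)]
    simpa using ((hasDerivAt_id x).ofReal_comp.mul (f.hasDerivAt x)).deriv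
  rw [mul_apply_eq_comp, SchwartzMap.derivCLM_apply, hderiv, add_apply, mul_apply_eq_comp,
    add_apply, positionCLM_apply, SchwartzMap.derivCLM_apply, one_apply_eq_self, add_comm]

lemma pow_derivCLM_creationCLM (E : ℝ) (b : ℕ) (f : 𝓢(ℝ, ℂ)) :
    (D ^ b) (creationCLM E f) =
      (E : ℂ) • (X ((D ^ b) f) + (b : ℂ) • (D ^ (b - 1)) f) - (D ^ (b + 1)) f := by
  have comm : (D ^ b) (X f) = X ((D ^ b) f) + (b : ℂ) • (D ^ (b - 1)) f := by
    simpa [mul_apply_eq_comp, Nat.cast_smul_eq_nsmul] using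
      DFunLike.congr_fun (pow_mul_eq_mul_pow_add derivCLM_mul_positionCLM b) f
  rw [creationCLM, sub_apply, smul_apply, map_sub, map_smul, comm, pow_succ, mul_apply_eq_comp]

/-- Truncated Gel'fand–Shilov estimates `‖xᵃ f⁽ᵇ⁾‖ ≤ C R^(a + b)` for all `a + b ≤ N`. They lose
only one order, and a factor `(1 + 2E) R`, under the creation operator. -/
def MomentBound (N : ℕ) (C R : ℝ) (f : 𝓢(ℝ, ℂ)) : Prop :=
  ∀ a b : ℕ, a + b ≤ N → ∀ x : ℝ, ‖(X ^ a) ((D ^ b) f) x‖ ≤ C * R ^ (a + b)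

lemma momentBound_creationCLM {E C R : ℝ} {N : ℕ} {f : 𝓢(ℝ, ℂ)} (hE : 0 ≤ E) (hR : 0 ≤ R)
    (hN : ((N + 1 : ℕ) : ℝ) ≤ R ^ 2) (h : MomentBound (N + 1) C R f) :
    MomentBound N (C * ((1 + 2 * E) * R)) R (creationCLM E f) := by
  intro a b hab x
  have hC : 0 ≤ C := (norm_nonneg _).trans (by simpa using h 0 0 (by lia) 0)
  have position_term : ‖(X ^ (a + 1)) ((D ^ b) f) x‖ ≤ C * R ^ (a + b + 1) := by
    simpa only [Nat.add_right_comm] using h (a + 1) b (by lia) x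
  have deriv_term : ‖(X ^ a) ((D ^ (b + 1)) f) x‖ ≤ C * R ^ (a + b + 1) :=
    h a (b + 1) (by lia) x
  have commutator_term : b * ‖(X ^ a) ((D ^ (b - 1)) f) x‖ ≤ C * R ^ (a + b + 1) := by
    rcases b with _ | b
    · simp only [Nat.cast_zero, zero_mul]
      positivity
    · calc ((b + 1 : ℕ) : ℝ) * ‖(X ^ a) ((D ^ b) f) x‖ ≤ R ^ 2 * (C * R ^ (a + b)) := by
            gcongr
            · exact (Nat.cast_le.2 (by lia)).trans hN
            · exact h a b (by lia) x
        _ = C * R ^ (a + (b + 1) + 1) := by ring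
  calc ‖(X ^ a) ((D ^ b) (creationCLM E f)) x‖
      = ‖E * ((X ^ (a + 1)) ((D ^ b) f) x + b * (X ^ a) ((D ^ (b - 1)) f) x) -
          (X ^ a) ((D ^ (b + 1)) f) x‖ := by
        simp only [pow_derivCLM_creationCLM, pow_positionCLM_apply, positionCLM_apply, sub_apply,
          smul_apply, add_apply, smul_eq_mul]
        ring_nf
    _ ≤ E * (‖(X ^ (a + 1)) ((D ^ b) f) x‖ + b * ‖(X ^ a) ((D ^ (b - 1)) f) x‖) +
          ‖(X ^ a) ((D ^ (b + 1)) f) x‖ := by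
        refine (norm_sub_le _ _).trans ?_
        rw [norm_mul, norm_real, Real.norm_of_nonneg hE]
        gcongr
        refine (norm_add_le _ _).trans ?_
        rw [norm_mul, norm_natCast]
    _ ≤ E * (C * R ^ (a + b + 1) + C * R ^ (a + b + 1)) + C * R ^ (a + b + 1) := by gcongr
    _ = C * ((1 + 2 * E) * R) * R ^ (a + b) := by ring

lemma momentBound_pow_creationCLM {E C R : ℝ} {N k : ℕ} {f : 𝓢(ℝ, ℂ)} (hE : 0 ≤ E) (hR : 0 ≤ R)
    (hN : ((N + k : ℕ) : ℝ) ≤ R ^ 2) (h : MomentBound (N + k) C R f) :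
    MomentBound N (C * ((1 + 2 * E) * R) ^ k) R ((creationCLM E ^ k) f) := by
  induction k generalizing C f with
  | zero => simpa using h
  | succ k ih =>
    have step := ih (by push_cast at hN ⊢; linarith) (momentBound_creationCLM hE hR hN h)
    rw [pow_succ (creationCLM E), mul_apply_eq_comp]
    convert step using 1
    ring

lemma MomentBound.one_add_sq_mul_norm_le {C R : ℝ} {f : 𝓢(ℝ, ℂ)} (hR : 1 ≤ R)
    (h : MomentBound 2 C R f) (x : ℝ) : (1 + x ^ 2) * ‖f x‖ ≤ 2 * C * R ^ 2 := by
  have hC : 0 ≤ C := (norm_nonneg _).trans (by simpa using h 0 0 (by lia) 0)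
  have h₀ : ‖f x‖ ≤ C := by simpa using h 0 0 (by lia) x
  have h₂ : x ^ 2 * ‖f x‖ ≤ C * R ^ 2 := by
    simpa only [pow_positionCLM_apply, pow_zero, one_apply_eq_self, norm_mul, norm_pow, norm_real,
      Real.norm_eq_abs, sq_abs] using h 2 0 (by lia) x
  have : C ≤ C * R ^ 2 := le_mul_of_one_le_right hC (one_le_pow₀ hR)
  linarith

variable {α E : ℝ}

lemma sqrt_pow_mul_norm_hermiteCoeff_le (hE : 0 < E) (n k : ℕ) (f : 𝓢(ℝ, ℂ)) :
    (√(2 * E) * √(n : ℝ)) ^ k * ‖hermiteCoeff E n f‖ ≤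
      ‖hermiteCoeff E (n + k) ((creationCLM E ^ k) f)‖ := by
  induction k with
  | zero => simp
  | succ k ih =>
    rw [pow_succ' (creationCLM E), mul_apply_eq_comp, hermiteCoeff_creationCLM hE, norm_mul,
      norm_real, Real.norm_of_nonneg (ladderCoeff_nonneg E _), ladderCoeff_eq_mul_sqrt hE.le,
      pow_succ', mul_assoc]
    gcongr
    · lia
    · exact ih

lemma momentBound_of_norm_le {C M : ℝ} {f : 𝓢(ℝ, ℂ)} (hα : 0 ≤ α) (hM : 0 ≤ M)
    (h : ∀ a b : ℕ, ∀ x : ℝ,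
      ‖(X ^ a) ((D ^ b) f) x‖ ≤ C * M ^ (a + b) * (gevreyWeight α a * gevreyWeight α b)) (N : ℕ) :
    MomentBound N C (M * (N : ℝ) ^ α) f := by
  intro a b hab x
  have hC : 0 ≤ C := (norm_nonneg _).trans (by simpa using h 0 0 0)
  calc ‖(X ^ a) ((D ^ b) f) x‖ ≤ C * M ^ (a + b) * (gevreyWeight α a * gevreyWeight α b) := h a b x
    _ ≤ C * M ^ (a + b) * (((N : ℝ) ^ α) ^ a * ((N : ℝ) ^ α) ^ b) := by
        gcongr
        · exact (gevreyWeight_pos α b).le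
        · exact gevreyWeight_le_rpow_pow hα (by lia)
        · exact gevreyWeight_le_rpow_pow hα (by lia)
    _ = C * (M * (N : ℝ) ^ α) ^ (a + b) := by rw [mul_pow, ← pow_add, mul_assoc]

lemma one_add_sq_mul_norm_pow_creationCLM_le {C M : ℝ} {f : 𝓢(ℝ, ℂ)} (hα : 1 / 2 ≤ α)
    (hE : 0 ≤ E) (hM : 1 ≤ M)
    (h : ∀ a b : ℕ, ∀ x : ℝ,
      ‖(X ^ a) ((D ^ b) f) x‖ ≤ C * M ^ (a + b) * (gevreyWeight α a * gevreyWeight α b))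
    (k : ℕ) (x : ℝ) :
    (1 + x ^ 2) * ‖(creationCLM E ^ k) f x‖ ≤ 2 * C * (1 + 2 * E) ^ k *
      ((M * Real.exp α) ^ (2 + k) * (gevreyWeight α 2 * gevreyWeight α k)) := by
  have hα₀ : 0 ≤ α := by linarith
  have hC : 0 ≤ C := (norm_nonneg _).trans (by simpa using h 0 0 0)
  set R := M * ((2 + k : ℕ) : ℝ) ^ α with hR_def
  have one_le : (1 : ℝ) ≤ (2 + k : ℕ) := Nat.one_le_cast.2 (by lia)
  have hR : 1 ≤ R := one_le_mul_of_one_le_of_one_le hM (Real.one_le_rpow one_le hα₀)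
  have hR_sq : ((2 + k : ℕ) : ℝ) ≤ R ^ 2 := by
    rw [← Real.sqrt_le_left (by positivity), Real.sqrt_eq_rpow]
    exact (Real.rpow_le_rpow_of_exponent_le one_le hα).trans
      (le_mul_of_one_le_left (by positivity) hM)
  have hR_pow : R ^ (2 + k) ≤
      (M * Real.exp α) ^ (2 + k) * (gevreyWeight α 2 * gevreyWeight α k) := by
    rw [hR_def, mul_pow, ← gevreyWeight_eq_pow, mul_pow, mul_assoc]
    gcongr
    exact gevreyWeight_add_le hα₀ 2 k
  calc (1 + x ^ 2) * ‖(creationCLM E ^ k) f x‖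
      ≤ 2 * (C * ((1 + 2 * E) * R) ^ k) * R ^ 2 :=
        (momentBound_pow_creationCLM hE (by positivity) hR_sq
          (momentBound_of_norm_le hα₀ (by positivity) h _)).one_add_sq_mul_norm_le hR x
    _ = 2 * C * (1 + 2 * E) ^ k * R ^ (2 + k) := by rw [mul_pow, pow_add]; ring
    _ ≤ _ := by gcongr

lemma ultrafastDecay_of_gelfandShilov (hα : 1 / 2 ≤ α) (hE : 0 < E) {f : 𝓢(ℝ, ℂ)}
    (hf : GelfandShilov α f) : UltrafastDecay α fun n => hermiteCoeff E n f := by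
  obtain ⟨C, M, hM, hf⟩ := (gelfandShilov_iff_exists_norm_le f).1 hf
  set B := M * Real.exp α
  have : 0 < B := by positivity
  have : 0 < √(2 * E) := by positivity
  refine ⟨√Real.pi * (2 * C * B ^ 2 * gevreyWeight α 2), (1 + 2 * E) * B / √(2 * E),
    by positivity, fun k n => ?_⟩
  calc √(n : ℝ) ^ k * ‖hermiteCoeff E n f‖
      = (√(2 * E) * √(n : ℝ)) ^ k * ‖hermiteCoeff E n f‖ / √(2 * E) ^ k := by
        rw [mul_pow]; field_simp
    _ ≤ √Real.pi * (2 * C * (1 + 2 * E) ^ k *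
          (B ^ (2 + k) * (gevreyWeight α 2 * gevreyWeight α k))) / √(2 * E) ^ k := by
        gcongr ?_ / _
        exact (sqrt_pow_mul_norm_hermiteCoeff_le hE n k f).trans (norm_hermiteCoeff_le hE (n + k)
          (one_add_sq_mul_norm_pow_creationCLM_le hα hE.le hM hf k))
    _ = _ := by
        rw [div_pow, mul_pow (1 + 2 * E), pow_add]; ring

variable {κ T : ℝ} {m : ℕ} {O : 𝓢(ℝ, ℂ) →L[ℂ] 𝓢(ℝ, ℂ)} {f : 𝓢(ℝ, ℂ)}

/-- In the Hermite basis the operator is dominated by a tridiagonal matrix with zero diagonal and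
entries `κ √n`, like the position and derivative operators. -/
def LadderBounded (E κ : ℝ) (O : 𝓢(ℝ, ℂ) →L[ℂ] 𝓢(ℝ, ℂ)) : Prop :=
  ∀ (f : 𝓢(ℝ, ℂ)) (n : ℕ), ‖hermiteCoeff E n (O f)‖ ≤
    κ * (√(n + 1 : ℕ) * ‖hermiteCoeff E (n + 1) f‖ + √n * ‖hermiteCoeff E (n - 1) f‖)

/-- Decay of order `m / 2` of the Hermite coefficients. Shifting the weight by its own order makes
a ladder-bounded operator lower `m` by one and multiply `T` by a constant independent of `m`. -/
def HermiteCoeffBound (E : ℝ) (m : ℕ) (T : ℝ) (f : 𝓢(ℝ, ℂ)) : Prop :=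
  ∀ n : ℕ, √(n + m : ℕ) ^ m * ‖hermiteCoeff E n f‖ ≤ T

lemma norm_ladderCoeff_mul (hE : 0 ≤ E) (n : ℕ) (c : ℂ) :
    ‖(ladderCoeff E n : ℂ) * c‖ = √(2 * E) * (√n * ‖c‖) := by
  rw [norm_mul, norm_real, Real.norm_of_nonneg (ladderCoeff_nonneg E n),
    ladderCoeff_eq_mul_sqrt hE, mul_assoc]

lemma ladderBounded_positionCLM (hE : 0 < E) : LadderBounded E ((2 * E)⁻¹ * √(2 * E)) X := by
  intro f n
  rw [hermiteCoeff_positionCLM hE, norm_mul, mul_assoc, mul_add (√(2 * E)),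
    ← norm_ladderCoeff_mul hE.le, ← norm_ladderCoeff_mul hE.le]
  have hnorm : ‖(2 * E : ℂ)⁻¹‖ = (2 * E)⁻¹ := by simp [abs_of_pos hE]
  rw [hnorm]
  gcongr
  exact norm_add_le _ _

lemma ladderBounded_derivCLM (hE : 0 < E) : LadderBounded E (2⁻¹ * √(2 * E)) D := by
  intro f n
  rw [hermiteCoeff_derivCLM hE, norm_mul, mul_assoc, mul_add (√(2 * E)),
    ← norm_ladderCoeff_mul hE.le, ← norm_ladderCoeff_mul hE.le, norm_inv, RCLike.norm_ofNat]
  gcongr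
  exact norm_sub_le _ _

lemma LadderBounded.mono {κ' : ℝ} (h : LadderBounded E κ O) (hκ : κ ≤ κ') :
    LadderBounded E κ' O :=
  fun f n => (h f n).trans (by gcongr)

lemma LadderBounded.hermiteCoeffBound (hO : LadderBounded E κ O) (hκ : 0 ≤ κ)
    (h : HermiteCoeffBound E (m + 1) T f) : HermiteCoeffBound E m (2 * κ * T) (O f) := by
  intro n
  have hT : 0 ≤ T := le_trans (by positivity) (h 0)
  have upper : √(n + m : ℕ) ^ m * (√(n + 1 : ℕ) * ‖hermiteCoeff E (n + 1) f‖) ≤ T := by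
    refine le_trans ?_ (h (n + 1))
    rw [← mul_assoc, pow_succ]
    gcongr <;> lia
  have lower : √(n + m : ℕ) ^ m * (√n * ‖hermiteCoeff E (n - 1) f‖) ≤ T := by
    rcases n with _ | n
    · simpa using hT
    · refine le_trans ?_ (h n)
      rw [Nat.add_sub_cancel, ← mul_assoc, pow_succ]
      gcongr √?_ ^ m * √?_ * _
      · exact_mod_cast (by lia : n + 1 + m ≤ n + (m + 1))
      · exact_mod_cast (by lia : n + 1 ≤ n + (m + 1))
  calc √(n + m : ℕ) ^ m * ‖hermiteCoeff E n (O f)‖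
      ≤ √(n + m : ℕ) ^ m * (κ * (√(n + 1 : ℕ) * ‖hermiteCoeff E (n + 1) f‖ +
          √n * ‖hermiteCoeff E (n - 1) f‖)) := by gcongr; exact hO f n
    _ = κ * (√(n + m : ℕ) ^ m * (√(n + 1 : ℕ) * ‖hermiteCoeff E (n + 1) f‖) +
          √(n + m : ℕ) ^ m * (√n * ‖hermiteCoeff E (n - 1) f‖)) := by ring
    _ ≤ κ * (T + T) := by gcongr
    _ = 2 * κ * T := by ring

lemma LadderBounded.hermiteCoeffBound_pow (hO : LadderBounded E κ O) (hκ : 0 ≤ κ) {k : ℕ}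
    (h : HermiteCoeffBound E (m + k) T f) :
    HermiteCoeffBound E m ((2 * κ) ^ k * T) ((O ^ k) f) := by
  induction k generalizing f T with
  | zero => simpa using h
  | succ k ih =>
    rw [pow_succ O, mul_apply_eq_comp, pow_succ, mul_assoc]
    exact ih (hO.hermiteCoeffBound hκ h)

lemma HermiteCoeffBound.integral_norm_sq_le (hE : 0 < E) (h : HermiteCoeffBound E 2 T f) :
    ∫ x, ‖f x‖ ^ 2 ≤ T ^ 2 * ∑' n : ℕ, 1 / ((n + 2 : ℕ) : ℝ) ^ 2 := by
  have summable_inv_sq : Summable fun n : ℕ => 1 / ((n + 2 : ℕ) : ℝ) ^ 2 :=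
    (summable_nat_add_iff 2).2 (Real.summable_one_div_nat_pow.2 one_lt_two)
  refine hasSum_le (fun n => ?_) (hasSum_sq_norm_hermiteCoeff hE f)
    (summable_inv_sq.hasSum.mul_left _)
  have hn := h n
  rw [Real.sq_sqrt (Nat.cast_nonneg _)] at hn
  rw [mul_one_div, le_div_iff₀ (by positivity), mul_comm, ← mul_pow]
  gcongr

lemma HermiteCoeffBound.norm_apply_le (hE : 0 < E) (hκ : 0 ≤ κ) (hD : LadderBounded E κ D)
    (h : HermiteCoeffBound E 3 T f) (x : ℝ) :
    ‖f x‖ ≤ √((1 + (2 * κ) ^ 2) * ∑' n : ℕ, 1 / ((n + 2 : ℕ) : ℝ) ^ 2) * T := by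
  have hT : 0 ≤ T := le_trans (by positivity) (h 0)
  have hf : HermiteCoeffBound E 2 T f := by
    refine fun n => le_trans ?_ (h n)
    have one_le : 1 ≤ √(n + 3 : ℕ) := Real.one_le_sqrt.2 (Nat.one_le_cast.2 (by lia))
    calc √(n + 2 : ℕ) ^ 2 * ‖hermiteCoeff E n f‖ ≤ √(n + 3 : ℕ) ^ 2 * ‖hermiteCoeff E n f‖ := by
          gcongr
          lia
      _ ≤ √(n + 3 : ℕ) ^ 3 * ‖hermiteCoeff E n f‖ := by
          gcongr ?_ * _
          exact pow_le_pow_right₀ one_le (by lia)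
  set Z := ∑' n : ℕ, 1 / ((n + 2 : ℕ) : ℝ) ^ 2
  have : 0 ≤ Z := tsum_nonneg fun n => by positivity
  refine le_of_sq_le_sq ?_ (by positivity)
  calc ‖f x‖ ^ 2 ≤ (∫ y, ‖f y‖ ^ 2) + ∫ y, ‖D f y‖ ^ 2 := norm_sq_le_integral_add_integral_deriv f x
    _ ≤ T ^ 2 * Z + (2 * κ * T) ^ 2 * Z :=
      add_le_add (hf.integral_norm_sq_le hE)
        ((hD.hermiteCoeffBound hκ h).integral_norm_sq_le hE)
    _ = (√((1 + (2 * κ) ^ 2) * Z) * T) ^ 2 := by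
      rw [mul_pow √_, Real.sq_sqrt (by positivity)]
      ring

lemma gelfandShilov_of_ultrafastDecay (hα : 1 / 2 ≤ α) (hE : 0 < E)
    (h : UltrafastDecay α fun n => hermiteCoeff E n f) : GelfandShilov α f := by
  obtain ⟨C, K, hK, h⟩ := h.exists_sqrt_add_pow_mul_norm_le hα
  have hα₀ : 0 ≤ α := by linarith
  have hC : 0 ≤ C := (norm_nonneg _).trans (by simpa using h 0 0)
  obtain ⟨κ, hκ, hX, hD⟩ : ∃ κ ≥ (1 : ℝ), LadderBounded E κ X ∧ LadderBounded E κ D :=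
    ⟨max 1 (max _ _), le_max_left _ _,
      (ladderBounded_positionCLM hE).mono ((le_max_left _ _).trans (le_max_right _ _)),
      (ladderBounded_derivCLM hE).mono ((le_max_right _ _).trans (le_max_right _ _))⟩
  set L := Real.exp α
  have hL : 1 ≤ L := Real.one_le_exp hα₀
  set Q := √((1 + (2 * κ) ^ 2) * ∑' n : ℕ, 1 / ((n + 2 : ℕ) : ℝ) ^ 2)
  have hw := gevreyWeight_pos α 3
  refine (gelfandShilov_iff_exists_norm_le f).2 ⟨Q * C * (K * L) ^ 3 * gevreyWeight α 3,
    2 * κ * K * L ^ 2, ?_, fun a b x => ?_⟩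
  · have hκK : 1 ≤ 2 * κ * K := one_le_mul_of_one_le_of_one_le (by linarith) hK
    exact one_le_mul_of_one_le_of_one_le hκK (one_le_pow₀ hL)
  have iterated : HermiteCoeffBound E 3
      ((2 * κ) ^ a * ((2 * κ) ^ b * (C * K ^ (3 + a + b) * gevreyWeight α (3 + a + b))))
      ((X ^ a) ((D ^ b) f)) :=
    hX.hermiteCoeffBound_pow (by linarith) (hD.hermiteCoeffBound_pow (by linarith) (h (3 + a + b)))
  calc ‖(X ^ a) ((D ^ b) f) x‖
      ≤ Q * ((2 * κ) ^ a * ((2 * κ) ^ b * (C * K ^ (3 + a + b) * gevreyWeight α (3 + a + b)))) :=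
        iterated.norm_apply_le hE (by linarith) hD x
    _ ≤ Q * ((2 * κ) ^ a * ((2 * κ) ^ b * (C * K ^ (3 + a + b) * (L ^ (3 + (a + b)) *
          (gevreyWeight α 3 * (L ^ (a + b) * (gevreyWeight α a * gevreyWeight α b))))))) := by
        gcongr
        rw [add_assoc]
        refine (gevreyWeight_add_le hα₀ 3 (a + b)).trans ?_
        gcongr
        exact gevreyWeight_add_le hα₀ a b
    _ = _ := by ring

lemma gelfandShilov_iff_ultrafastDecay (hα : 1 / 2 ≤ α) (hE : 0 < E) (f : 𝓢(ℝ, ℂ)) :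
    GelfandShilov α f ↔ UltrafastDecay α fun n => hermiteCoeff E n f :=
  ⟨ultrafastDecay_of_gelfandShilov hα hE, gelfandShilov_of_ultrafastDecay hα hE⟩

end LadderEstimates

/-- a Schwartz function belongs to `S^α_α(ℝ)` iff its Hermite
coefficients have ultrafast falloff:
`∃ κ > 0, Σ_n |a_n|² e^{2Ω(κ√n)} < ∞`. -/
theorem gelfandShilov_iff_ultrafast (α E' : ℝ) (hα : 1 / 2 ≤ α) (hE' : 0 < E')
    (φ : SchwartzMap ℝ ℂ) :
    GelfandShilov α (fun q => φ q) ↔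
      ∃ κ > (0 : ℝ), Summable (fun n : ℕ =>
        ‖∫ q : ℝ, ((hermiteFn E' n q : ℝ) : ℂ) * φ q‖ ^ 2 *
          Real.exp (2 * Omega α (κ * Real.sqrt (n : ℝ)))) :=
  (gelfandShilov_iff_ultrafastDecay hα hE' φ).trans
    (ultrafastDecay_iff_exists_summable (by linarith))
end
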